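/- arXiv:1404.1641 — 2 statements merged into one kernel-verified Lean document; each statement's English description precedes it below -/
import Mathlib

section
/- Given an exterior splash S on a fixed line of PG(2,q^3), the number of order-q-subplanes having exterior splash S is 2q^6(q^3-1). Equivalently: the number of order-q-subplanes exterior to a fixed line is q^9(q^3-1)(q^3+1)(q-1), the number of exterior splashes on a fixed line is (1/2)q^3(q^3+1)(q-1), and the group of homographies fixing the line is transitive on subplanes exterior to it. -/
open Matrix

/-- The point of PG(2,q^3) represented by `x` lies on the line with covector `u`. -/
def OnCov (F : Type) [Field F] (x : Projectivization F (Fin 3 → F))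
    (u : Fin 3 → F) : Prop :=
  ∑ i, u i * x.rep i = 0

/-- The order-q-subplane of PG(2,q^3): the image of the canonical subplane PG(2,q)
under the homography induced by g ∈ GL(3,q^3). -/
def Subplane (k F : Type) [Field k] [Field F] [Algebra k F]
    (g : GL (Fin 3) F) : Set (Projectivization F (Fin 3 → F)) :=
  {x | ∃ v : Fin 3 → k, v ≠ 0 ∧ ∃ c : F, c ≠ 0 ∧
    x.rep = c • (g : Matrix (Fin 3) (Fin 3) F).mulVec (fun i => algebraMap k F (v i))}

/-- The subplane of g is exterior to the line with covector u. -/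
def ExteriorTo (k F : Type) [Field k] [Field F] [Algebra k F]
    (g : GL (Fin 3) F) (u : Fin 3 → F) : Prop :=
  ∀ x ∈ Subplane k F g, ¬ OnCov F x u

/-- The exterior splash of the subplane of g onto the line with covector u: the points
of that line lying on an extended line of the subplane (lines of the subplane are the
images under g of lines of PG(2,q), with covectors w ↦ w · g⁻¹). -/
def SplashOf (k F : Type) [Field k] [Field F] [Algebra k F]
    (g : GL (Fin 3) F) (u : Fin 3 → F) : Set (Projectivization F (Fin 3 → F)) :=
  {x | OnCov F x u ∧ ∃ w : Fin 3 → k, w ≠ 0 ∧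
    OnCov F x (Matrix.vecMul (fun i => algebraMap k F (w i))
      ((g⁻¹ : GL (Fin 3) F) : Matrix (Fin 3) (Fin 3) F))}


/-! ### Norm-type algebra -/

/-- The norm expression built from an endomorphism. -/
def nrm {k F : Type} [Field k] [Field F] [Algebra k F] (s : F →ₐ[k] F) (x : F) : F :=
  x * s x * s (s x)

section alg
variable {k F : Type} [Field k] [Field F] [Algebra k F] (s : F →ₐ[k] F)

lemma nrm_mul (x y : F) : nrm s (x * y) = nrm s x * nrm s y := by
  simp only [nrm, map_mul]; ring

lemma nrm_zero : nrm s 0 = 0 := by simp [nrm]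

lemma nrm_one : nrm s 1 = 1 := by simp [nrm]

lemma nrm_eq_zero (x : F) : nrm s x = 0 ↔ x = 0 := by
  simp [nrm]

lemma nrm_neg (x : F) : nrm s (-x) = - nrm s x := by
  simp only [nrm, map_neg]; ring

lemma s_nrm (h3 : ∀ x, s (s (s x)) = x) (x : F) : s (nrm s x) = nrm s x := by
  simp only [nrm, map_mul, h3]; ring

lemma nrm_nrm (h3 : ∀ x, s (s (s x)) = x) (x : F) : nrm s (nrm s x) = nrm s x ^ 3 := by
  conv_lhs => rw [nrm, s_nrm s h3, s_nrm s h3]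
  ring

lemma nrm_pow {q : ℕ} (hs : ∀ x, s x = x ^ q) (x : F) : nrm s x = x ^ (q ^ 2 + q + 1) := by
  simp only [nrm, hs]; ring

/-- the final algebra of the stabiliser computation -/
lemma alg_core (h3 : ∀ x, s (s (s x)) = x) (α β γ δ : F)
    (hdet : α * δ ≠ β * γ)
    (h0 : nrm s α + nrm s β = nrm s γ + nrm s δ)
    (h1 : α * s β * s (s β) = γ * s δ * s (s δ))
    (h2 : α * s α * s (s β) = γ * s γ * s (s δ)) :
    (β = 0 ∧ γ = 0 ∧ α ≠ 0 ∧ nrm s α = nrm s δ) ∨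
    (α = 0 ∧ δ = 0 ∧ β ≠ 0 ∧ nrm s β = nrm s γ) := by
  by_cases ha : α = 0
  · right
    subst ha
    have hb : β ≠ 0 := by rintro rfl; simp at hdet
    have hc : γ ≠ 0 := by rintro rfl; simp at hdet
    have hd : δ = 0 := by simpa [hc] using h1.symm
    subst hd
    simpa [nrm_zero, hb] using h0
  by_cases hb : β = 0
  · left
    subst hb
    have hd : δ ≠ 0 := by rintro rfl; simp at hdet
    have hc : γ = 0 := by simpa [hd] using h2.symm
    subst hc
    simpa [nrm_zero, ha] using h0
  exfalso
  have hcd : γ ≠ 0 ∧ δ ≠ 0 := by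
    have : γ * s δ * s (s δ) ≠ 0 := by rw [← h1]; simp [ha, hb]
    simp at this; tauto
  obtain ⟨hc, hd⟩ := hcd
  have e1 : (α * δ) * nrm s β = (β * γ) * nrm s δ := by
    simp only [nrm]; linear_combination β * δ * h1
  have h2' : s α * s (s α) * β = s γ * s (s γ) * δ := by
    have := congrArg s h2
    simpa only [map_mul, h3] using this
  have e2 : (β * γ) * nrm s α = (α * δ) * nrm s γ := by
    simp only [nrm]; linear_combination α * γ * h2'
  have hx : α * δ ≠ 0 := mul_ne_zero ha hd
  have hy : β * γ ≠ 0 := mul_ne_zero hb hc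
  have e3 : nrm s α * nrm s β = nrm s γ * nrm s δ := by
    apply mul_left_cancel₀ (mul_ne_zero hx hy)
    linear_combination (β * γ * nrm s α) * e1 + (β * γ * nrm s δ) * e2
  have e4 : (nrm s α - nrm s γ) * (nrm s α - nrm s δ) = 0 := by
    linear_combination nrm s α * h0 - e3
  have key : nrm s α ≠ nrm s γ := by
    intro h
    rw [← h] at e2
    exact hdet (mul_right_cancel₀ ((nrm_eq_zero s α).not.2 ha) e2).symm
  rcases mul_eq_zero.1 e4 with h | h
  · exact key (sub_eq_zero.1 h)
  · have h5 : nrm s α = nrm s δ := sub_eq_zero.1 h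
    have h6 : nrm s β = nrm s γ := by linear_combination h0 - h5
    have h7 := congrArg (nrm s) e2
    simp only [nrm_mul, nrm_nrm s h3] at h7
    rw [← h5, h6] at h7
    apply key
    have hA := (nrm_eq_zero s α).not.2 ha
    have hC := (nrm_eq_zero s γ).not.2 hc
    apply mul_left_cancel₀ (mul_ne_zero (pow_ne_zero 2 hA) (pow_ne_zero 2 hC))
    linear_combination h7
end alg

section fin
variable {k F : Type} [Field k] [Field F] [Algebra k F] [Fintype F] (s : F →ₐ[k] F)
  {q : ℕ}

lemma ncard_nrm_one (hs : ∀ x, s x = x ^ q) (hq : 2 ≤ q)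
    (hF : Fintype.card F = q ^ 3) :
    Set.ncard {x : F | nrm s x = 1} = q ^ 2 + q + 1 := by
  classical
  obtain ⟨g, hg⟩ := IsCyclic.exists_generator (α := Fˣ)
  have hord : orderOf g = q ^ 3 - 1 := by
    rw [orderOf_eq_card_of_forall_mem_zpowers hg, Nat.card_eq_fintype_card, Fintype.card_units, hF]
  have hq3 : q ^ 3 - 1 = (q - 1) * (q ^ 2 + q + 1) := by
    obtain ⟨r, rfl⟩ := Nat.exists_eq_add_of_le hq
    have : 2 + r - 1 = r + 1 := by omega
    rw [this]
    apply Nat.sub_eq_of_eq_add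
    ring
  have hprim : IsPrimitiveRoot (g : F) (q ^ 3 - 1) := by
    rw [← hord, ← orderOf_units]; exact IsPrimitiveRoot.orderOf _
  have hp2 := hprim.pow (by have := Nat.pow_le_pow_left hq 3; omega) hq3
  have := hp2.card_nthRootsFinset
  rw [← this, ← Set.ncard_coe_finset]
  congr 1
  ext x
  simp only [Set.mem_ofPred_eq, Finset.mem_coe, nrm_pow s hs]
  rw [Polynomial.mem_nthRootsFinset (by positivity)]

open Polynomial in
lemma poly_core (hs : ∀ x, s x = x ^ q) (hq : 2 ≤ q)
    (hF : Fintype.card F = q ^ 3) (α β γ δ : F)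
    (h : ∀ t, nrm s t = 1 → nrm s (α * t + β) = nrm s (γ * t + δ)) :
    (nrm s α + nrm s β = nrm s γ + nrm s δ) ∧
    (α * s β * s (s β) = γ * s δ * s (s δ)) ∧
    (α * s α * s (s β) = γ * s γ * s (s δ)) := by
  classical
  let R (a b : F) : F[X] :=
    C (nrm s a + nrm s b) + C (a * s b * s (s b)) * X ^ 1 + C (b * s a * s (s b)) * X ^ q
      + C (a * s a * s (s b)) * X ^ (q + 1) + C (b * s b * s (s a)) * X ^ (q ^ 2)
      + C (a * s b * s (s a)) * X ^ (q ^ 2 + 1) + C (b * s a * s (s a)) * X ^ (q ^ 2 + q)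
  have hR : ∀ a b t, nrm s t = 1 → (R a b).eval t = nrm s (a * t + b) := by
    intro a b t ht
    have h1 : t ^ q = s t := (hs t).symm
    have h2 : t ^ (q ^ 2) = s (s t) := by rw [hs, hs, ← pow_mul, sq]
    simp only [R, eval_add, eval_mul, eval_C, eval_pow, eval_X, pow_add, h1, h2, pow_one]
    simp only [nrm, map_add, map_mul] at ht ⊢
    linear_combination (-(a * s a * s (s a))) * ht
  have hdeg : ∀ a b, (R a b).natDegree ≤ q ^ 2 + q := by
    intro a b
    have hq1 : 1 ≤ q ^ 2 + q := by nlinarith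
    simp only [R]
    have hX : ∀ (c : F) (m : ℕ), m ≤ q ^ 2 + q → (C c * X ^ m).natDegree ≤ q ^ 2 + q :=
      fun c m hm => (natDegree_C_mul_X_pow_le c m).trans hm
    refine natDegree_add_le_of_degree_le (natDegree_add_le_of_degree_le
      (natDegree_add_le_of_degree_le (natDegree_add_le_of_degree_le (natDegree_add_le_of_degree_le
      (natDegree_add_le_of_degree_le ?_ ?_) ?_) ?_) ?_) ?_) ?_
    · simp
    all_goals apply hX; nlinarith
  have hz : R α β - R γ δ = 0 := by
    by_contra hne
    have hle := card_le_degree_of_subset_roots (p := R α β - R γ δ)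
      (Z := (Set.toFinite {x : F | nrm s x = 1}).toFinset) (by
        intro t ht
        have ht' : nrm s t = 1 := by simpa using ht
        rw [mem_roots hne, IsRoot, eval_sub, hR _ _ _ ht', hR _ _ _ ht', h t ht', sub_self])
    rw [← Set.ncard_eq_toFinset_card, ncard_nrm_one s hs hq hF] at hle
    have h3 := (natDegree_sub_le_iff_left (n := q ^ 2 + q) (p := R α β) (hdeg γ δ)).2 (hdeg α β)
    omega
  have hz' : R α β = R γ δ := sub_eq_zero.1 hz
  have hqq : 2 * q ≤ q ^ 2 := by nlinarith
  have n1 : q ≠ 0 := by omega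
  have n2 : q ≠ 1 := by omega
  refine ⟨?_, ?_, ?_⟩
  · have := congrArg (fun p => p.eval 0) hz'
    simpa [R, n1, n2] using this
  · have := congrArg (fun p => p.coeff 1) hz'
    have m1 : (1 : ℕ) ≠ q := by omega
    have m2 : (1 : ℕ) ≠ q + 1 := by omega
    have m3 : (1 : ℕ) ≠ q ^ 2 := by omega
    have m4 : (1 : ℕ) ≠ q ^ 2 + 1 := by omega
    have m5 : (1 : ℕ) ≠ q ^ 2 + q := by omega
    simpa only [R, coeff_add, coeff_C_mul, coeff_X_pow, coeff_C, m1, m2, m3, m4, m5, if_false,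
      if_true, mul_zero, mul_one, add_zero, zero_add, one_ne_zero] using this
  · have := congrArg (fun p => p.coeff (q + 1)) hz'
    have m0 : q + 1 ≠ 0 := by omega
    have m1 : q + 1 ≠ 1 := by omega
    have m2 : q + 1 ≠ q := by omega
    have m3 : q + 1 ≠ q ^ 2 := by intro h; have : q ^ 2 = q * q := sq q; nlinarith
    have m4 : q + 1 ≠ q ^ 2 + 1 := by omega
    have m5 : q + 1 ≠ q ^ 2 + q := by omega
    simpa only [R, coeff_add, coeff_C_mul, coeff_X_pow, coeff_C, m0, m1, m2, m3, m4, m5, if_false,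
      if_true, mul_zero, mul_one, add_zero, zero_add] using this

/-- Moore determinant criterion -/
lemma moore_row_indep (hs : ∀ x, s x = x ^ q) (hq : 2 ≤ q)
    (hF : Fintype.card F = q ^ 3) (c0 c1 c2 : F)
    (h : ∀ t, c0 * t + c1 * s t + c2 * s (s t) = 0) : c0 = 0 ∧ c1 = 0 ∧ c2 = 0 := by
  classical
  have hqq : 2 * q ≤ q ^ 2 := by nlinarith
  let p : Polynomial F := Polynomial.C c0 * Polynomial.X ^ 1 + Polynomial.C c1 * Polynomial.X ^ q
    + Polynomial.C c2 * Polynomial.X ^ (q ^ 2)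
  have hdeg : p.natDegree ≤ q ^ 2 := by
    have hX : ∀ (c : F) (m : ℕ), m ≤ q ^ 2 →
      (Polynomial.C c * Polynomial.X ^ m).natDegree ≤ q ^ 2 :=
      fun c m hm => (Polynomial.natDegree_C_mul_X_pow_le c m).trans hm
    refine Polynomial.natDegree_add_le_of_degree_le
      (Polynomial.natDegree_add_le_of_degree_le ?_ ?_) ?_
    all_goals apply hX; omega
  have hz : p = 0 := by
    by_contra hne
    have hle := Polynomial.card_le_degree_of_subset_roots (p := p) (Z := Finset.univ) (by
        intro t _
        rw [Polynomial.mem_roots hne, Polynomial.IsRoot]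
        have h2 : t ^ (q ^ 2) = s (s t) := by rw [hs, hs, ← pow_mul, sq]
        simp only [p, Polynomial.eval_add, Polynomial.eval_mul, Polynomial.eval_C,
          Polynomial.eval_pow, Polynomial.eval_X, h2, ← hs, pow_one, h])
    rw [Finset.card_univ, hF] at hle
    have : q ^ 2 < q ^ 3 := Nat.pow_lt_pow_right (by omega) (by norm_num)
    omega
  have a1 : (1 : ℕ) ≠ q := by omega
  have a2 : (1 : ℕ) ≠ q ^ 2 := by omega
  have a3 : q ≠ q ^ 2 := by omega
  have e1 := congrArg (fun p => p.coeff 1) hz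
  have e2 := congrArg (fun p => p.coeff q) hz
  have e3 := congrArg (fun p => p.coeff (q ^ 2)) hz
  simp only [p, Polynomial.coeff_add, Polynomial.coeff_C_mul, Polynomial.coeff_X_pow, a1, a2, a3,
    a1.symm, a2.symm, a3.symm, if_false, if_true, mul_zero, mul_one, add_zero, zero_add,
    Polynomial.coeff_zero] at e1 e2 e3
  exact ⟨e1, e2, e3⟩
end fin

section geom
variable {k F : Type} [Field k] [Field F] [Algebra k F]

/-- coordinatewise embedding -/
abbrev lft (F : Type) {k : Type} [Field k] [Field F] [Algebra k F] (w : Fin 3 → k) : Fin 3 → F :=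
  fun i => algebraMap k F (w i)

lemma lft_ne_zero (w : Fin 3 → k) : lft F w = 0 ↔ w = 0 := by
  constructor
  · intro h; ext i; simpa using congrFun h i
  · rintro rfl; ext i; simp

lemma lft_mulVec (m : Matrix (Fin 3) (Fin 3) k) (w : Fin 3 → k) :
    lft F (m *ᵥ w) = m.map (algebraMap k F) *ᵥ lft F w := by
  ext i; simp [lft, Matrix.mulVec, dotProduct]

lemma lft_vecMul (m : Matrix (Fin 3) (Fin 3) k) (w : Fin 3 → k) :
    lft F (w ᵥ* m) = lft F w ᵥ* m.map (algebraMap k F) := by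
  ext i; simp [lft, Matrix.vecMul, dotProduct]

/-- independent over the small field -/
def Ind (k : Type) {F : Type} [Field k] [Field F] [Algebra k F] (a : Fin 3 → F) : Prop :=
  ∀ w : Fin 3 → k, w ≠ 0 → a ⬝ᵥ lft F w ≠ 0

lemma ind_iff (a : Fin 3 → F) : Ind k a ↔ LinearIndependent k a := by
  rw [Fintype.linearIndependent_iff, Ind]
  have : ∀ w : Fin 3 → k, a ⬝ᵥ lft F w = ∑ i, w i • a i := by
    intro w; simp [dotProduct, Algebra.smul_def, mul_comm]
  simp only [this]
  constructor
  · intro h w hw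
    by_contra hne
    apply h w _ hw
    rintro rfl; simp at hne
  · intro h w hne hw
    exact hne (funext (h w hw))

/-- Moore matrix -/
def moore (s : F →ₐ[k] F) (a : Fin 3 → F) : Matrix (Fin 3) (Fin 3) F :=
  !![a 0, a 1, a 2; s (a 0), s (a 1), s (a 2); s (s (a 0)), s (s (a 1)), s (s (a 2))]

lemma moore_ne_zero [Fintype F] {q : ℕ} (s : F →ₐ[k] F) (hs : ∀ x, s x = x ^ q) (hq : 2 ≤ q)
    (hF : Fintype.card F = q ^ 3) (hr : Module.finrank k F = 3) (a : Fin 3 → F) :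
    Ind k a ↔ (moore s a).det ≠ 0 := by
  constructor
  · intro h hdet
    obtain ⟨v, hv, h0⟩ := Matrix.exists_vecMul_eq_zero_iff.2 hdet
    let L : F →ₗ[k] F := LinearMap.mulLeft k (v 0) + (LinearMap.mulLeft k (v 1)) ∘ₗ s.toLinearMap
      + (LinearMap.mulLeft k (v 2)) ∘ₗ s.toLinearMap ∘ₗ s.toLinearMap
    have hsp : Submodule.span k (Set.range a) = ⊤ :=
      ((ind_iff a).1 h).span_eq_top_of_card_eq_finrank (by simp [hr])
    have hL : L = 0 := by
      apply LinearMap.ext_on_range hsp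
      intro i
      have := congrFun h0 i
      simp only [moore, Matrix.vecMul, dotProduct, Fin.sum_univ_three] at this
      fin_cases i <;> simpa [L] using this
    have := moore_row_indep s hs hq hF (v 0) (v 1) (v 2) (fun t => by
      simpa [L] using LinearMap.congr_fun hL t)
    apply hv
    ext i; fin_cases i <;> simp [this]
  · intro h w hw h0
    apply h
    apply Matrix.exists_mulVec_eq_zero_iff.1
    refine ⟨lft F w, (lft_ne_zero w).not.2 hw, ?_⟩
    have e1 : a 0 * algebraMap k F (w 0) + a 1 * algebraMap k F (w 1)
      + a 2 * algebraMap k F (w 2) = 0 := by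
      simpa [dotProduct, Fin.sum_univ_three] using h0
    have e2 := congrArg s e1
    have e3 := congrArg s e2
    simp only [map_add, map_mul, AlgHom.commutes, map_zero] at e2 e3
    ext i
    fin_cases i <;> simp [moore, Matrix.mulVec, dotProduct, Fin.sum_univ_three, e1, e2, e3]

lemma moore_pair (s : F →ₐ[k] F) (h3 : ∀ x, s (s (s x)) = x) (a y : Fin 3 → F)
    (h : a ⬝ᵥ y = 0) :
    (moore s a).det * (moore s y).det =
      nrm s ((moore s a *ᵥ y) 1) + nrm s ((moore s a *ᵥ y) 2) := by
  have e1 : a 0 * y 0 + a 1 * y 1 + a 2 * y 2 = 0 := by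
    simpa [dotProduct, Fin.sum_univ_three] using h
  have e2 := congrArg s e1
  have e3 := congrArg s e2
  simp only [map_add, map_mul, map_zero] at e2 e3
  rw [← Matrix.det_transpose (moore s y), ← Matrix.det_mul]
  have : moore s a * (moore s y)ᵀ =
    !![0, s ((moore s a *ᵥ y) 2), s (s ((moore s a *ᵥ y) 1));
       (moore s a *ᵥ y) 1, 0, s (s ((moore s a *ᵥ y) 2));
       (moore s a *ᵥ y) 2, s ((moore s a *ᵥ y) 1), 0] := by
    ext i j
    fin_cases i <;> fin_cases j <;>
    simp [moore, Matrix.mul_apply, Matrix.mulVec, dotProduct, Fin.sum_univ_three, e1, e2, e3, h3]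
  rw [this, Matrix.det_fin_three]
  simp [nrm]
  ring

lemma onCov_mk (x : Fin 3 → F) (hx : x ≠ 0) (c : Fin 3 → F) :
    OnCov F (Projectivization.mk F x hx) c ↔ c ⬝ᵥ x = 0 := by
  obtain ⟨a, ha⟩ := Projectivization.exists_smul_eq_mk_rep F x hx
  rw [OnCov, ← ha]
  change c ⬝ᵥ (a • x) = 0 ↔ _
  rw [dotProduct_smul]
  exact smul_eq_zero_iff_eq a

/-- vector version of the splash -/
def vsplash (k : Type) {F : Type} [Field k] [Field F] [Algebra k F] (u : Fin 3 → F)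
    (g : GL (Fin 3) F) : Set (Fin 3 → F) :=
  {x | u ⬝ᵥ x = 0 ∧ ∃ w : Fin 3 → k, w ≠ 0 ∧
    (lft F w ᵥ* ((g⁻¹ : GL (Fin 3) F) : Matrix (Fin 3) (Fin 3) F)) ⬝ᵥ x = 0}

lemma mem_splash (u : Fin 3 → F) (g : GL (Fin 3) F) (x : Fin 3 → F) (hx : x ≠ 0) :
    Projectivization.mk F x hx ∈ SplashOf k F g u ↔ x ∈ vsplash k u g := by
  unfold SplashOf vsplash
  simp only [Set.mem_ofPred_eq, onCov_mk]

lemma splash_eq_iff (u : Fin 3 → F) (g g' : GL (Fin 3) F) :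
    SplashOf k F g u = SplashOf k F g' u ↔ vsplash k u g = vsplash k u g' := by
  constructor
  · intro h
    ext x
    by_cases hx : x = 0
    · subst hx
      have : ∃ w : Fin 3 → k, w ≠ 0 := exists_ne 0
      simpa [vsplash] using this
    · rw [← mem_splash u g x hx, h, mem_splash]
  · intro h
    ext x
    induction x using Projectivization.ind with
    | h x hx => rw [mem_splash, mem_splash, h]

lemma mem_sub (g : GL (Fin 3) F) (x : Fin 3 → F) (hx : x ≠ 0) :
    Projectivization.mk F x hx ∈ Subplane k F g ↔
      ∃ v : Fin 3 → k, v ≠ 0 ∧ ∃ c : F, c ≠ 0 ∧ x = c • (g.1 *ᵥ lft F v) := by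
  obtain ⟨a, ha⟩ := Projectivization.exists_smul_eq_mk_rep F x hx
  unfold Subplane
  simp only [Set.mem_ofPred_eq, ← ha]
  constructor
  · rintro ⟨v, hv, c, hc, h⟩
    refine ⟨v, hv, (a⁻¹ : Fˣ) * c, by simp [hc], ?_⟩
    rw [mul_smul]
    rw [← h, Units.smul_def, smul_smul]; simp
  · rintro ⟨v, hv, c, hc, h⟩
    refine ⟨v, hv, a * c, by simp [hc], ?_⟩
    rw [mul_smul, h]; rfl

lemma gl_mulVec_ne (g : GL (Fin 3) F) (x : Fin 3 → F) (hx : x ≠ 0) : g.1 *ᵥ x ≠ 0 := by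
  intro h
  apply hx
  have := congrArg (fun y => g⁻¹.1 *ᵥ y) h
  simpa [Matrix.mulVec_mulVec] using this

lemma exterior_iff (u : Fin 3 → F) (g : GL (Fin 3) F) :
    ExteriorTo k F g u ↔ Ind k (u ᵥ* g.1) := by
  constructor
  · intro h w hw h0
    have hne := gl_mulVec_ne g (lft F w) ((lft_ne_zero w).not.2 hw)
    apply h (Projectivization.mk F _ hne)
    · rw [mem_sub]; exact ⟨w, hw, 1, one_ne_zero, by simp⟩
    · rw [onCov_mk, Matrix.dotProduct_mulVec]; exact h0
  · intro h x
    induction x using Projectivization.ind with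
    | h x hx =>
      rw [mem_sub, onCov_mk]
      rintro ⟨v, hv, c, hc, rfl⟩ h0
      rw [dotProduct_smul, Matrix.dotProduct_mulVec] at h0
      have := smul_eq_zero.1 h0
      exact h v hv (this.resolve_left hc)

/-- the subgroup stabilising the canonical subplane, as a hom -/
def emb (c : Fˣ) (m : GL (Fin 3) k) : GL (Fin 3) F :=
  Matrix.GeneralLinearGroup.scalar (Fin 3) c * Matrix.GeneralLinearGroup.map (algebraMap k F) m

lemma emb_val (c : Fˣ) (m : GL (Fin 3) k) :
    (emb (F := F) c m).1 = (c : F) • m.1.map (algebraMap k F) := by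
  ext i j
  simp [emb, Matrix.GeneralLinearGroup.map]

lemma emb_inv (c : Fˣ) (m : GL (Fin 3) k) : (emb (F := F) c m)⁻¹ = emb c⁻¹ m⁻¹ := by
  rw [inv_eq_iff_mul_eq_one]
  apply Units.ext
  rw [Units.val_mul, emb_val, emb_val]
  simp [← Matrix.map_mul]

lemma emb_inj_iff (c c' : Fˣ) (m m' : GL (Fin 3) k) :
    emb (F := F) c m = emb c' m' ↔ ∃ l : kˣ, c' = c * Units.map (algebraMap k F).toMonoidHom l ∧
      m = Matrix.GeneralLinearGroup.scalar (Fin 3) l * m' := by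
  constructor
  · intro h
    have hv : ∀ i j, (c : F) * algebraMap k F (m.1 i j) = c' * algebraMap k F (m'.1 i j) := by
      intro i j
      have := congrArg (fun g : GL (Fin 3) F => g.1 i j) h
      simpa [emb_val] using this
    obtain ⟨i, j, hij⟩ : ∃ i j, m.1 i j ≠ 0 := by
      by_contra hne
      push Not at hne
      have : m.1 = 0 := by ext i j; exact hne i j
      exact m.ne_zero this
    have hij' : m'.1 i j ≠ 0 := by
      intro h0
      have := hv i j
      rw [h0] at this
      simp [hij] at this
    have hl : m.1 i j / m'.1 i j ≠ 0 := div_ne_zero hij hij'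
    have hc : (c' : F) = c * algebraMap k F (m.1 i j / m'.1 i j) := by
      have h1 : algebraMap k F (m'.1 i j) ≠ 0 := by simpa using hij'
      rw [map_div₀, ← mul_div_assoc, hv i j]
      field_simp
    refine ⟨Units.mk0 _ hl, ?_, ?_⟩
    · apply Units.ext; simpa using hc
    · apply Units.ext
      ext a b
      have h2 := hv a b
      rw [hc, mul_assoc, ← map_mul] at h2
      have h3 := (algebraMap k F).injective (mul_left_cancel₀ c.ne_zero h2)
      simpa using h3
  · rintro ⟨l, rfl, rfl⟩
    apply Units.ext
    rw [emb_val, emb_val]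
    ext a b
    simp [mul_assoc]

lemma sub_emb (g : GL (Fin 3) F) (c : Fˣ) (m : GL (Fin 3) k) :
    Subplane k F (g * emb c m) = Subplane k F g := by
  have key : ∀ (g : GL (Fin 3) F) (c : Fˣ) (m : GL (Fin 3) k),
      Subplane k F (g * emb c m) ⊆ Subplane k F g := by
    intro g c m x
    induction x using Projectivization.ind with
    | h x hx =>
      rw [mem_sub, mem_sub]
      rintro ⟨v, hv, d, hd, rfl⟩
      refine ⟨m.1 *ᵥ v, gl_mulVec_ne m v hv, d * c, by simp [hd], ?_⟩
      rw [lft_mulVec, Units.val_mul, emb_val, mul_smul, ← Matrix.mulVec_mulVec,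
        Matrix.smul_mulVec, Matrix.mulVec_smul]
  apply (key g c m).antisymm
  have := key (g * emb c m) c⁻¹ m⁻¹
  rwa [← emb_inv, mul_inv_cancel_right] at this

lemma vsplash_emb (u : Fin 3 → F) (g : GL (Fin 3) F) (c : Fˣ) (m : GL (Fin 3) k) :
    vsplash k u (g * emb c m) = vsplash k u g := by
  have key : ∀ (g : GL (Fin 3) F) (c : Fˣ) (m : GL (Fin 3) k),
      vsplash k u (g * emb c m) ⊆ vsplash k u g := by
    rintro g c m x ⟨h, w, hw, h0⟩
    refine ⟨h, w ᵥ* m⁻¹.1, ?_, ?_⟩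
    · intro h1
      apply hw
      have := congrArg (fun y => y ᵥ* m.1) h1
      simpa [Matrix.vecMul_vecMul] using this
    · rw [lft_vecMul]
      rw [_root_.mul_inv_rev, emb_inv, Units.val_mul, emb_val, ← Matrix.vecMul_vecMul, Matrix.vecMul_smul,
        Matrix.smul_vecMul, smul_dotProduct] at h0
      exact (smul_eq_zero.1 h0).resolve_left (by simp)
  apply (key g c m).antisymm
  have := key (g * emb c m) c⁻¹ m⁻¹
  rwa [← emb_inv, mul_inv_cancel_right] at this

lemma sub_eq_imp (g g' : GL (Fin 3) F) (h : Subplane k F g' = Subplane k F g) :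
    ∃ c : Fˣ, ∃ m : GL (Fin 3) k, g' = g * emb c m := by
  have key : ∀ v : Fin 3 → k, v ≠ 0 → ∃ w : Fin 3 → k, ∃ c : F, c ≠ 0 ∧
      (g⁻¹ * g').1 *ᵥ lft F v = c • lft F w := by
    intro v hv
    have hne := gl_mulVec_ne g' (lft F v) ((lft_ne_zero v).not.2 hv)
    have : Projectivization.mk F _ hne ∈ Subplane k F g := by
      rw [← h, mem_sub]; exact ⟨v, hv, 1, one_ne_zero, by simp⟩
    rw [mem_sub] at this
    obtain ⟨w, hw, c, hc, e⟩ := this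
    refine ⟨w, c, hc, ?_⟩
    rw [Units.val_mul, ← Matrix.mulVec_mulVec, e, Matrix.mulVec_smul, Matrix.mulVec_mulVec,
      ← Units.val_mul]
    simp
  set H := g⁻¹ * g' with hH
  suffices ∃ c : Fˣ, ∃ m : GL (Fin 3) k, H = emb c m by
    obtain ⟨c, m, e⟩ := this
    exact ⟨c, m, by rw [← e, hH, mul_inv_cancel_left]⟩
  have k1 : ∀ i : Fin 3, ∃ w : Fin 3 → k, ∃ c : F, ∀ j, H.1 j i = c * algebraMap k F (w j) := by
    intro i
    obtain ⟨w, c, hc, e⟩ := key (Pi.single i 1) (by simp)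
    refine ⟨w, c, fun j => ?_⟩
    have := congrFun e j
    have h2 : lft F (Pi.single i (1 : k)) = Pi.single i (1 : F) := by
      ext j; by_cases hj : j = i <;> simp [Pi.single_apply, hj]
    rw [h2] at this
    simpa using this
  choose V c hV using k1
  obtain ⟨w, d, hd, hw⟩ := key (fun _ => 1) (by intro h; simpa using congrFun h 0)
  let M : Matrix (Fin 3) (Fin 3) k := Matrix.of fun j i => V i j
  have hHM : H.1 = M.map (algebraMap k F) * Matrix.diagonal c := by
    ext j i
    rw [Matrix.mul_diagonal, hV]; simp [M, mul_comm]
  have hdet : H.1.det ≠ 0 := (Matrix.isUnit_iff_isUnit_det _).1 H.isUnit |>.ne_zero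
  have hM : M.det ≠ 0 := by
    intro h0
    apply hdet
    rw [hHM, Matrix.det_mul]
    have : (M.map (algebraMap k F)).det = algebraMap k F M.det := by
      rw [RingHom.map_det]; rfl
    rw [this, h0]; simp
  have hMu : IsUnit M.det := hM.isUnit
  have hc : c = d • lft F (M⁻¹ *ᵥ w) := by
    have e1 : M.map (algebraMap k F) *ᵥ c = d • lft F w := by
      rw [← hw, hHM, ← Matrix.mulVec_mulVec]
      congr 1
      ext i; simp [Matrix.mulVec_diagonal]
    have := congrArg (fun y => M⁻¹.map (algebraMap k F) *ᵥ y) e1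
    simp only [Matrix.mulVec_mulVec, ← Matrix.map_mul, Matrix.nonsing_inv_mul _ hMu,
      Matrix.mulVec_smul, ← lft_mulVec] at this
    simpa using this
  have hfin : H.1 = d • (M * Matrix.diagonal (M⁻¹ *ᵥ w)).map (algebraMap k F) := by
    rw [hHM, hc]
    ext j i
    simp only [Matrix.mul_diagonal, Matrix.map_apply, Matrix.smul_apply, Pi.smul_apply,
      smul_eq_mul, map_mul]
    ring
  have hdet2 : (M * Matrix.diagonal (M⁻¹ *ᵥ w)).det ≠ 0 := by
    intro h0
    apply hdet
    rw [hfin, Matrix.det_smul]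
    have : ((M * Matrix.diagonal (M⁻¹ *ᵥ w)).map (algebraMap k F)).det = algebraMap k F
      (M * Matrix.diagonal (M⁻¹ *ᵥ w)).det := by
      rw [RingHom.map_det]; rfl
    rw [this, h0]; simp
  refine ⟨Units.mk0 d hd, Matrix.GeneralLinearGroup.mkOfDetNeZero _ hdet2, ?_⟩
  apply Units.ext
  rw [emb_val, hfin]; rfl

lemma vsplash_mul (u : Fin 3 → F) (h g : GL (Fin 3) F) (hu : u ᵥ* h.1 = u) (x : Fin 3 → F) :
    x ∈ vsplash k u (h * g) ↔ h⁻¹.1 *ᵥ x ∈ vsplash k u g := by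
  have hu' : u ᵥ* h⁻¹.1 = u := by
    conv_lhs => rw [← hu, Matrix.vecMul_vecMul, ← Units.val_mul]
    simp
  unfold vsplash
  simp only [Set.mem_ofPred_eq]
  rw [Matrix.dotProduct_mulVec, hu']
  simp only [Matrix.dotProduct_mulVec, _root_.mul_inv_rev, Units.val_mul, Matrix.vecMul_vecMul]

/-- vector version of translated splashes -/
lemma vsplash_mul_eq (u : Fin 3 → F) (h g g' : GL (Fin 3) F) (hu : u ᵥ* h.1 = u) :
    vsplash k u (h * g) = vsplash k u (h * g') ↔ vsplash k u g = vsplash k u g' := by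
  constructor
  · intro e
    ext x
    have := Set.ext_iff.1 e (h.1 *ᵥ x)
    rw [vsplash_mul u h g hu, vsplash_mul u h g' hu] at this
    simpa [Matrix.mulVec_mulVec] using this
  · intro e
    ext x
    rw [vsplash_mul u h g hu, vsplash_mul u h g' hu, e]

lemma exists_row (u : Fin 3 → F) (hu : u ≠ 0) : ∃ g : GL (Fin 3) F,
    (Pi.single 0 1 : Fin 3 → F) ᵥ* g.1 = u := by
  have mk : ∀ M : Matrix (Fin 3) (Fin 3) F, M.det ≠ 0 → M 0 = u → ∃ g : GL (Fin 3) F,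
    (Pi.single 0 1 : Fin 3 → F) ᵥ* g.1 = u := by
    intro M h1 h2
    refine ⟨Matrix.GeneralLinearGroup.mkOfDetNeZero M h1, ?_⟩
    rw [Matrix.single_one_vecMul]; exact h2
  by_cases h0 : u 0 = 0
  · by_cases h1 : u 1 = 0
    · have h2 : u 2 ≠ 0 := by
        intro h2; apply hu; ext i; fin_cases i <;> simp [h0, h1, h2]
      apply mk !![u 0, u 1, u 2; 1, 0, 0; 0, 1, 0]
      · simpa [Matrix.det_fin_three] using h2
      · ext i; fin_cases i <;> rfl
    · apply mk !![u 0, u 1, u 2; 1, 0, 0; 0, 0, 1]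
      · simpa [Matrix.det_fin_three] using h1
      · ext i; fin_cases i <;> rfl
  · apply mk !![u 0, u 1, u 2; 0, 1, 0; 0, 0, 1]
    · simpa [Matrix.det_fin_three] using h0
    · ext i; fin_cases i <;> rfl

lemma exists_trans (u v : Fin 3 → F) (hu : u ≠ 0) (hv : v ≠ 0) : ∃ g : GL (Fin 3) F,
    u ᵥ* g.1 = v := by
  obtain ⟨g, hg⟩ := exists_row u hu
  obtain ⟨g', hg'⟩ := exists_row v hv
  refine ⟨g⁻¹ * g', ?_⟩
  rw [← hg, Matrix.vecMul_vecMul, ← Units.val_mul, mul_inv_cancel_left, hg']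

/-- transitivity, in factored form -/
lemma trans_core (hr : Module.finrank k F = 3) (u : Fin 3 → F) (g₁ g₂ : GL (Fin 3) F)
    (h1 : ExteriorTo k F g₁ u) (h2 : ExteriorTo k F g₂ u) :
    ∃ h : GL (Fin 3) F, ∃ m : GL (Fin 3) k, u ᵥ* h.1 = u ∧ h * g₁ = g₂ * emb 1 m := by
  rw [exterior_iff, ind_iff] at h1 h2
  let b1 := basisOfLinearIndependentOfCardEqFinrank h1 (by simp [hr])
  let b2 := basisOfLinearIndependentOfCardEqFinrank h2 (by simp [hr])
  have hb1 : ⇑b1 = u ᵥ* g₁.1 := coe_basisOfLinearIndependentOfCardEqFinrank _ _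
  have hb2 : ⇑b2 = u ᵥ* g₂.1 := coe_basisOfLinearIndependentOfCardEqFinrank _ _
  let m : GL (Fin 3) k := ⟨b2.toMatrix b1, b1.toMatrix b2, b2.toMatrix_mul_toMatrix_flip b1,
    b1.toMatrix_mul_toMatrix_flip b2⟩
  have hm : (u ᵥ* g₂.1) ᵥ* (emb (F := F) 1 m).1 = u ᵥ* g₁.1 := by
    rw [← hb1, ← hb2, emb_val]
    ext i
    have := b2.sum_toMatrix_smul_self b1 i
    rw [← this]
    simp [Matrix.vecMul, dotProduct, m, Algebra.smul_def, mul_comm]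
  refine ⟨g₂ * emb 1 m * g₁⁻¹, m, ?_, by simp⟩
  rw [Units.val_mul, Units.val_mul, ← Matrix.vecMul_vecMul, ← Matrix.vecMul_vecMul, hm,
    Matrix.vecMul_vecMul, ← Units.val_mul]
  simp

end geom

section stab
variable {k F : Type} [Field k] [Field F] [Algebra k F]

/-- normal form of the splash -/
def WW (s : F →ₐ[k] F) : Set (Fin 3 → F) := {y | y 0 = 0 ∧ nrm s (y 1) = nrm s (y 2)}

/-- stabiliser of the normal form -/
def KK (s : F →ₐ[k] F) : Set (GL (Fin 3) F) :=
  {M | (∀ y, (M.1 *ᵥ y) 0 = y 0) ∧ ∀ y, M.1 *ᵥ y ∈ WW s ↔ y ∈ WW s}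

/-- explicit parametrisation of the stabiliser -/
def prm (s : F →ₐ[k] F) : Bool × F × F × Fˣ × {x : F | nrm s x = 1} → Matrix (Fin 3) (Fin 3) F
  | (false, c1, c2, a, z) => !![1, 0, 0; c1, a, 0; c2, 0, a * z]
  | (true, c1, c2, a, z) => !![1, 0, 0; c1, 0, a; c2, a * z, 0]

lemma prm_inj (s : F →ₐ[k] F) : Function.Injective (prm s) := by
  rintro ⟨b, c1, c2, a, z⟩ ⟨b', c1', c2', a', z'⟩ h
  have e : ∀ i j, prm s (b, c1, c2, a, z) i j = prm s (b', c1', c2', a', z') i j := by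
    intro i j; rw [h]
  cases b <;> cases b'
  · have h1 := e 1 0
    have h2 := e 2 0
    have h3 := e 1 1
    have h4 := e 2 2
    simp [prm] at h1 h2 h3 h4
    have h3 := Units.ext h3
    subst h3
    simp at h4
    simp [h1, h2, Subtype.ext_iff, h4]
  · have h3 := e 1 1
    simp [prm] at h3
  · have h3 := e 1 1
    simp [prm] at h3
    exact absurd h3.symm a'.ne_zero
  · have h1 := e 1 0
    have h2 := e 2 0
    have h3 := e 1 2
    have h4 := e 2 1
    simp [prm] at h1 h2 h3 h4
    have h3 := Units.ext h3
    subst h3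
    simp at h4
    simp [h1, h2, Subtype.ext_iff, h4]

lemma KK_image [Fintype F] {q : ℕ} (s : F →ₐ[k] F) (hs : ∀ x, s x = x ^ q) (hq : 2 ≤ q)
    (hF : Fintype.card F = q ^ 3) (h3 : ∀ x, s (s (s x)) = x) :
    (fun M : GL (Fin 3) F => M.1) '' KK s = Set.range (prm s) := by
  ext M
  constructor
  · rintro ⟨M, ⟨hM0, hMW⟩, rfl⟩
    have hmv : ∀ (y : Fin 3 → F) i, (M.1 *ᵥ y) i = M.1 i 0 * y 0 + M.1 i 1 * y 1 + M.1 i 2 * y 2 := by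
      intro y i; simp [Matrix.mulVec, dotProduct, Fin.sum_univ_three]
    have r0 : M.1 0 0 = 1 := by simpa [hmv] using hM0 ![1, 0, 0]
    have r1 : M.1 0 1 = 0 := by simpa [hmv] using hM0 ![0, 1, 0]
    have r2 : M.1 0 2 = 0 := by simpa [hmv] using hM0 ![0, 0, 1]
    have hdet : M.1.det ≠ 0 := (Matrix.isUnit_iff_isUnit_det _).1 M.isUnit |>.ne_zero
    have hdet' : M.1 1 1 * M.1 2 2 ≠ M.1 1 2 * M.1 2 1 := by
      intro h
      apply hdet
      rw [Matrix.det_fin_three, r0, r1, r2]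
      linear_combination h
    have hpol := poly_core s hs hq hF (M.1 1 1) (M.1 1 2) (M.1 2 1) (M.1 2 2) (by
      intro t ht
      have := (hMW ![0, t, 1]).2 (by simp [WW, ht, nrm_one])
      simpa [WW, hmv] using this.2)
    obtain ⟨p0, p1, p2⟩ := hpol
    rcases alg_core s h3 _ _ _ _ hdet' p0 p1 p2 with ⟨hb, hc, ha, hn⟩ | ⟨ha, hd, hb, hn⟩
    · have hz : nrm s (M.1 2 2 / M.1 1 1) = 1 := by
        have hN := (nrm_eq_zero s (M.1 1 1)).not.2 ha
        apply mul_left_cancel₀ hN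
        rw [← nrm_mul, mul_div_cancel₀ _ ha, mul_one, hn]
      refine ⟨(false, M.1 1 0, M.1 2 0, Units.mk0 _ ha, ⟨M.1 2 2 / M.1 1 1, hz⟩), ?_⟩
      ext i j
      fin_cases i <;> fin_cases j <;> simp [prm, r0, r1, r2, hb, hc, mul_div_cancel₀ _ ha]
    · have hz : nrm s (M.1 2 1 / M.1 1 2) = 1 := by
        have hN := (nrm_eq_zero s (M.1 1 2)).not.2 hb
        apply mul_left_cancel₀ hN
        rw [← nrm_mul, mul_div_cancel₀ _ hb, mul_one, hn]
      refine ⟨(true, M.1 1 0, M.1 2 0, Units.mk0 _ hb, ⟨M.1 2 1 / M.1 1 2, hz⟩), ?_⟩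
      ext i j
      fin_cases i <;> fin_cases j <;> simp [prm, r0, r1, r2, ha, hd, mul_div_cancel₀ _ hb]
  · rintro ⟨⟨b, c1, c2, a, z, hz⟩, rfl⟩
    have hz : nrm s z = 1 := hz
    have hz0 : z ≠ 0 := by rintro rfl; simp [nrm_zero] at hz
    have ha : nrm s (a : F) ≠ 0 := (nrm_eq_zero s _).not.2 a.ne_zero
    cases b
    · refine ⟨Matrix.GeneralLinearGroup.mkOfDetNeZero (prm s (false, c1, c2, a, ⟨z, hz⟩)) ?_,
        ⟨?_, ?_⟩, rfl⟩
      · simp [prm, Matrix.det_fin_three, hz0]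
      · intro y
        change (prm s (false, c1, c2, a, ⟨z, hz⟩) *ᵥ y) 0 = _
        simp [prm, Matrix.mulVec, dotProduct, Fin.sum_univ_three]
      · intro y
        change prm s (false, c1, c2, a, ⟨z, hz⟩) *ᵥ y ∈ _ ↔ _
        simp only [WW, Set.mem_ofPred_eq]
        have : (prm s (false, c1, c2, a, ⟨z, hz⟩) *ᵥ y) 0 = y 0 := by
          simp [prm, Matrix.mulVec, dotProduct, Fin.sum_univ_three]
        rw [this]
        apply and_congr_right
        intro hy
        simp [prm, Matrix.mulVec, dotProduct, Fin.sum_univ_three, hy, nrm_mul, hz, ha]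
    · refine ⟨Matrix.GeneralLinearGroup.mkOfDetNeZero (prm s (true, c1, c2, a, ⟨z, hz⟩)) ?_,
        ⟨?_, ?_⟩, rfl⟩
      · simp [prm, Matrix.det_fin_three, hz0]
      · intro y
        change (prm s (true, c1, c2, a, ⟨z, hz⟩) *ᵥ y) 0 = _
        simp [prm, Matrix.mulVec, dotProduct, Fin.sum_univ_three]
      · intro y
        change prm s (true, c1, c2, a, ⟨z, hz⟩) *ᵥ y ∈ _ ↔ _
        simp only [WW, Set.mem_ofPred_eq]
        have : (prm s (true, c1, c2, a, ⟨z, hz⟩) *ᵥ y) 0 = y 0 := by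
          simp [prm, Matrix.mulVec, dotProduct, Fin.sum_univ_three]
        rw [this]
        apply and_congr_right
        intro hy
        simp [prm, Matrix.mulVec, dotProduct, Fin.sum_univ_three, hy, nrm_mul, hz, ha, eq_comm]

lemma KK_ncard [Fintype F] {q : ℕ} (s : F →ₐ[k] F) (hs : ∀ x, s x = x ^ q) (hq : 2 ≤ q)
    (hF : Fintype.card F = q ^ 3) (h3 : ∀ x, s (s (s x)) = x) :
    (KK s).ncard = 2 * (q ^ 3 * (q ^ 3 * ((q ^ 3 - 1) * (q ^ 2 + q + 1)))) := by
  classical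
  rw [← Set.ncard_image_of_injective (KK s) (f := fun M : GL (Fin 3) F => M.1)
    (fun a b h => Units.ext h), KK_image s hs hq hF h3]
  rw [← Set.image_univ, Set.ncard_image_of_injective _ (prm_inj s), Set.ncard_univ]
  rw [Nat.card_prod, Nat.card_prod, Nat.card_prod, Nat.card_prod]
  rw [Nat.card_coe_set_eq, ncard_nrm_one s hs hq hF]
  simp [Fintype.card_units, hF]

/-- the homographies fixing the covector -/
def UU (u : Fin 3 → F) : Set (GL (Fin 3) F) := {h | u ᵥ* h.1 = u}

lemma exists_P [Fintype F] {q : ℕ} (s : F →ₐ[k] F) (hs : ∀ x, s x = x ^ q) (hq : 2 ≤ q)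
    (hF : Fintype.card F = q ^ 3) (h3 : ∀ x, s (s (s x)) = x) (hr : Module.finrank k F = 3)
    (u : Fin 3 → F) (g : GL (Fin 3) F) (hg : ExteriorTo k F g u) :
    ∃ P : GL (Fin 3) F, (∀ x, (P.1 *ᵥ x) 0 = u ⬝ᵥ x) ∧
      ∀ x, x ∈ vsplash k u g ↔ P.1 *ᵥ x ∈ WW s := by
  rw [exterior_iff] at hg
  have hm := (moore_ne_zero s hs hq hF hr _).1 hg
  let M1 := Matrix.GeneralLinearGroup.mkOfDetNeZero _ hm
  let D : GL (Fin 3) F := Matrix.GeneralLinearGroup.mkOfDetNeZero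
    (Matrix.diagonal ![1, 1, -1]) (by simp [Matrix.det_diagonal, Fin.prod_univ_three])
  have hP : ∀ x, (D * M1 * g⁻¹).1 *ᵥ x =
      Matrix.diagonal ![1, 1, -1] *ᵥ (moore s (u ᵥ* g.1) *ᵥ (g⁻¹.1 *ᵥ x)) := by
    intro x
    rw [Matrix.mulVec_mulVec, Matrix.mulVec_mulVec]; rfl
  have hu0 : ∀ x, (u ᵥ* g.1) ⬝ᵥ (g⁻¹.1 *ᵥ x) = u ⬝ᵥ x := by
    intro x
    rw [Matrix.dotProduct_mulVec, Matrix.vecMul_vecMul, ← Units.val_mul]; simp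
  have hP0 : ∀ x, ((D * M1 * g⁻¹).1 *ᵥ x) 0 = u ⬝ᵥ x := by
    intro x
    rw [hP, ← hu0, Matrix.mulVec_diagonal]
    simp [moore, Matrix.mulVec, dotProduct, Fin.sum_univ_three]
  refine ⟨D * M1 * g⁻¹, hP0, fun x => ?_⟩
  simp only [WW, vsplash, Set.mem_ofPred_eq, hP0]
  apply and_congr_right
  intro hx
  set y := g⁻¹.1 *ᵥ x with hy
  have hpair := moore_pair s h3 (u ᵥ* g.1) y (by rw [hu0, hx])
  rw [hP, Matrix.mulVec_diagonal, Matrix.mulVec_diagonal]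
  have e1 : nrm s (![1, 1, -1] (1 : Fin 3) * (moore s (u ᵥ* g.1) *ᵥ y) 1) =
      nrm s (![1, 1, -1] (2 : Fin 3) * (moore s (u ᵥ* g.1) *ᵥ y) 2) ↔
      nrm s ((moore s (u ᵥ* g.1) *ᵥ y) 1) + nrm s ((moore s (u ᵥ* g.1) *ᵥ y) 2) = 0 := by
    simp [nrm_neg, eq_neg_iff_add_eq_zero]
  rw [e1, ← hpair, mul_eq_zero, or_iff_right hm, ← not_iff_not]
  rw [← ne_eq (Matrix.det _), ← moore_ne_zero s hs hq hF hr y]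
  simp only [Ind, not_exists, not_and]
  refine forall_congr' fun w => forall_congr' fun hw => ?_
  rw [dotProduct_comm y, hy, Matrix.dotProduct_mulVec]

lemma stab_ncard [Fintype F] {q : ℕ} (s : F →ₐ[k] F) (hs : ∀ x, s x = x ^ q) (hq : 2 ≤ q)
    (hF : Fintype.card F = q ^ 3) (h3 : ∀ x, s (s (s x)) = x) (hr : Module.finrank k F = 3)
    (u : Fin 3 → F) (g : GL (Fin 3) F) (hg : ExteriorTo k F g u) :
    Set.ncard {h | h ∈ UU u ∧ vsplash k u (h * g) = vsplash k u g} =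
      2 * (q ^ 3 * (q ^ 3 * ((q ^ 3 - 1) * (q ^ 2 + q + 1)))) := by
  obtain ⟨P, hP0, hPW⟩ := exists_P s hs hq hF h3 hr u g hg
  rw [← KK_ncard s hs hq hF h3]
  have hinj : Function.Injective (fun h : GL (Fin 3) F => P * h⁻¹ * P⁻¹) := by
    intro a b h; simpa using h
  rw [← Set.ncard_image_of_injective _ hinj]
  congr 1
  have c1 : ∀ (A B : GL (Fin 3) F) (x : Fin 3 → F), A.1 *ᵥ (B.1 *ᵥ x) = (A * B).1 *ᵥ x := by
    intro A B x; rw [Matrix.mulVec_mulVec]; rfl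
  ext M
  constructor
  · rintro ⟨h, ⟨hU, hS⟩, rfl⟩
    have hU : u ᵥ* h.1 = u := hU
    have hU' : u ᵥ* h⁻¹.1 = u := by
      conv_lhs => rw [← hU, Matrix.vecMul_vecMul, ← Units.val_mul]
      simp
    constructor
    · intro y
      dsimp only
      rw [mul_assoc, ← c1, hP0, ← c1, Matrix.dotProduct_mulVec, hU', ← hP0, c1]; simp
    · intro y
      dsimp only
      have := Set.ext_iff.1 hS (P⁻¹.1 *ᵥ y)
      rw [vsplash_mul u h g hU, hPW, hPW] at this
      simpa [c1, mul_assoc] using this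
  · rintro ⟨hM0, hMW⟩
    have hU : u ᵥ* (P⁻¹ * M⁻¹ * P).1 = u := by
      apply dotProduct_eq
      intro x
      rw [← Matrix.dotProduct_mulVec, ← hP0, ← hP0, c1, ← hM0 ((P * (P⁻¹ * M⁻¹ * P)).1 *ᵥ x), c1]
      simp [mul_assoc]
    refine ⟨P⁻¹ * M⁻¹ * P, ⟨hU, ?_⟩, by simp [mul_assoc]⟩
    ext x
    rw [vsplash_mul u _ g hU, hPW, hPW, ← hMW (P.1 *ᵥ x), c1, c1]
    simp [mul_assoc]
end stab

lemma fib {α β : Type*} [Finite α] (s : Set α) (f : α → β) (m : ℕ)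
    (h : ∀ a ∈ s, Set.ncard {x | x ∈ s ∧ f x = f a} = m) : s.ncard = (f '' s).ncard * m := by
  classical
  have hs := Set.toFinite s
  rw [Set.ncard_eq_toFinset_card s, Finset.card_eq_sum_card_image f,
    Finset.sum_const_nat (m := m)]
  · congr 1
    rw [← Set.ncard_coe_finset]; congr 1; ext; simp
  · intro b hb
    simp only [Finset.mem_image, Set.Finite.mem_toFinset] at hb
    obtain ⟨a, ha, rfl⟩ := hb
    rw [← h a ha, ← Set.ncard_coe_finset]; congr 1; ext; simp

section cnt
variable {k F : Type} [Field k] [Field F] [Algebra k F] [Fintype k] [Fintype F] {q : ℕ}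

lemma ncard_fibre (u : Fin 3 → F) (a : GL (Fin 3) F) :
    Set.ncard {x : GL (Fin 3) F | u ᵥ* x.1 = u ᵥ* a.1} = (UU u).ncard := by
  rw [← Set.ncard_image_of_injective (UU u) (mul_left_injective a)]
  congr 1
  ext x
  constructor
  · intro h
    have h : u ᵥ* x.1 = u ᵥ* a.1 := h
    refine ⟨x * a⁻¹, ?_, by simp⟩
    change u ᵥ* _ = u
    rw [Units.val_mul, ← Matrix.vecMul_vecMul, h, Matrix.vecMul_vecMul, ← Units.val_mul]
    simp
  · rintro ⟨h, hh, rfl⟩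
    have hh : u ᵥ* h.1 = u := hh
    change u ᵥ* (h * a).1 = _
    rw [Units.val_mul, ← Matrix.vecMul_vecMul, hh]

lemma card_UU (hF : Fintype.card F = q ^ 3) (u : Fin 3 → F) (hu : u ≠ 0) :
    Nat.card (GL (Fin 3) F) = ((q ^ 3) ^ 3 - 1) * (UU u).ncard := by
  classical
  rw [← Set.ncard_univ, fib Set.univ (fun g : GL (Fin 3) F => u ᵥ* g.1) (UU u).ncard]
  · congr 1
    have : (fun g : GL (Fin 3) F => u ᵥ* g.1) '' Set.univ = {0}ᶜ := by
      ext v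
      constructor
      · rintro ⟨g, -, rfl⟩ h0
        have h0 : u ᵥ* g.1 = 0 := h0
        apply hu
        have := congrArg (fun y => y ᵥ* g⁻¹.1) h0
        simpa [Matrix.vecMul_vecMul] using this
      · intro hv
        obtain ⟨g, hg⟩ := exists_trans u v hu hv
        exact ⟨g, trivial, hg⟩
    rw [this, Set.ncard_compl, Set.ncard_singleton]
    simp [hF]
  · intro a _
    rw [← ncard_fibre u a]; congr 1; ext x; simp

/-- exterior group elements -/
def GX (k : Type) {F : Type} [Field k] [Field F] [Algebra k F] (u : Fin 3 → F) :
    Set (GL (Fin 3) F) := {g | ExteriorTo k F g u}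

lemma card_GX (hr : Module.finrank k F = 3)
    (u : Fin 3 → F) (hu : u ≠ 0) :
    (GX k u).ncard = Nat.card (GL (Fin 3) k) * (UU u).ncard := by
  classical
  rw [fib (GX k u) (fun g : GL (Fin 3) F => u ᵥ* g.1) (UU u).ncard]
  · congr 1
    have : (fun g : GL (Fin 3) F => u ᵥ* g.1) '' GX k u = {a | LinearIndependent k a} := by
      ext v
      constructor
      · rintro ⟨g, hg, rfl⟩
        exact (ind_iff _).1 ((exterior_iff u g).1 hg)
      · intro hv
        have hv : LinearIndependent k v := hv
        have hv0 : v ≠ 0 := by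
          rintro rfl; exact hv.ne_zero 0 rfl
        obtain ⟨g, hg⟩ := exists_trans u v hu hv0
        refine ⟨g, ?_, hg⟩
        change ExteriorTo k F g u
        rw [exterior_iff, ind_iff, hg]
        exact hv
    rw [this, ← Nat.card_coe_set_eq, Matrix.card_GL_field]
    have h2 := card_linearIndependent (K := k) (V := F) (k := 3) (by omega)
    rw [hr] at h2
    exact h2
  · intro a ha
    rw [← ncard_fibre u a]; congr 1; ext x
    simp only [Set.mem_ofPred_eq, and_iff_right_iff_imp]
    intro h
    change ExteriorTo k F x u
    have ha : ExteriorTo k F a u := ha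
    rw [exterior_iff] at ha ⊢
    rwa [h]

/-- the stabiliser of the canonical subplane -/
def BB (k F : Type) [Field k] [Field F] [Algebra k F] : Set (GL (Fin 3) F) :=
  Set.range (fun p : Fˣ × GL (Fin 3) k => emb p.1 p.2)

lemma card_BB (hk : Fintype.card k = q) (hF : Fintype.card F = q ^ 3) :
    (q ^ 3 - 1) * Nat.card (GL (Fin 3) k) = (BB k F).ncard * (q - 1) := by
  classical
  have h0 : (q ^ 3 - 1) * Nat.card (GL (Fin 3) k) =
      (Set.univ : Set (Fˣ × GL (Fin 3) k)).ncard := by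
    rw [Set.ncard_univ, Nat.card_prod]; simp [Fintype.card_units, hF]
  rw [h0, fib Set.univ (fun p : Fˣ × GL (Fin 3) k => emb (F := F) p.1 p.2) (q - 1)]
  · rw [Set.image_univ]; rfl
  · rintro ⟨c, m⟩ -
    have hinj : Function.Injective (fun l : kˣ => ((c * Units.map (algebraMap k F).toMonoidHom l,
      Matrix.GeneralLinearGroup.scalar (Fin 3) l⁻¹ * m) : Fˣ × GL (Fin 3) k)) := by
      intro a b h
      have h1 := (Prod.ext_iff.1 h).1
      have h2 := congrArg Units.val (mul_left_cancel h1)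
      apply Units.ext
      simpa using h2
    have h1 : q - 1 = (Set.univ : Set kˣ).ncard := by
      rw [Set.ncard_univ]; simp [Fintype.card_units, hk]
    rw [h1, ← Set.ncard_image_of_injective _ hinj]
    congr 1
    ext ⟨c', m'⟩
    simp only [Set.mem_univ, true_and, Set.image_univ, Set.mem_range, Set.mem_ofPred_eq]
    rw [eq_comm, emb_inj_iff]
    refine exists_congr fun l => ?_
    rw [Prod.mk.injEq, map_inv, inv_mul_eq_iff_eq_mul, eq_comm (a := c')]

lemma BB_pos : 0 < (BB k F).ncard :=
  (Set.ncard_pos (Set.toFinite _)).2 (Set.range_nonempty _)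

lemma sub_fibre (g : GL (Fin 3) F) :
    Set.ncard {x | Subplane k F x = Subplane k F g} = (BB k F).ncard := by
  rw [← Set.ncard_image_of_injective (BB k F) (mul_right_injective g)]
  congr 1
  ext x
  constructor
  · intro h
    obtain ⟨c, m, e⟩ := sub_eq_imp g x h
    exact ⟨_, ⟨(c, m), rfl⟩, e.symm⟩
  · rintro ⟨_, ⟨⟨c, m⟩, rfl⟩, rfl⟩
    exact sub_emb g c m

lemma splash_of_sub (u : Fin 3 → F) (g g' : GL (Fin 3) F)
    (h : Subplane k F g' = Subplane k F g) : SplashOf k F g' u = SplashOf k F g u := by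
  obtain ⟨c, m, rfl⟩ := sub_eq_imp g g' h
  rw [splash_eq_iff, vsplash_emb]

/-- counting group elements over subplanes -/
lemma card_sub (s : Set (GL (Fin 3) F))
    (hs : ∀ g ∈ s, ∀ g', Subplane k F g' = Subplane k F g → g' ∈ s) :
    s.ncard = (Subplane k F '' s).ncard * (BB k F).ncard := by
  apply fib
  intro a ha
  rw [← sub_fibre a]
  congr 1
  ext x
  simp only [Set.mem_ofPred_eq, and_iff_right_iff_imp]
  exact hs a ha x

/-- group elements with a given splash -/
def Phi (k : Type) {F : Type} [Field k] [Field F] [Algebra k F] (u : Fin 3 → F)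
    (g : GL (Fin 3) F) : Set (GL (Fin 3) F) :=
  {x | x ∈ GX k u ∧ SplashOf k F x u = SplashOf k F g u}

lemma mul_mem_GX (u : Fin 3 → F) (h g : GL (Fin 3) F) (hu : u ᵥ* h.1 = u) :
    h * g ∈ GX k u ↔ g ∈ GX k u := by
  change ExteriorTo k F _ u ↔ ExteriorTo k F _ u
  rw [exterior_iff, exterior_iff, Units.val_mul, ← Matrix.vecMul_vecMul, hu]

lemma Phi_const (hr : Module.finrank k F = 3) (u : Fin 3 → F) (g₁ g₂ : GL (Fin 3) F)
    (h1 : ExteriorTo k F g₁ u) (h2 : ExteriorTo k F g₂ u) :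
    (Phi k u g₁).ncard = (Phi k u g₂).ncard := by
  obtain ⟨h, m, hu, e⟩ := trans_core hr u g₁ g₂ h1 h2
  rw [← Set.ncard_image_of_injective (Phi k u g₁) (mul_right_injective h)]
  congr 1
  have hv : vsplash k u g₂ = vsplash k u (h * g₁) := by rw [e, vsplash_emb]
  ext x
  constructor
  · rintro ⟨x, ⟨hx, hS⟩, rfl⟩
    refine ⟨(mul_mem_GX u h x hu).2 hx, ?_⟩
    rw [splash_eq_iff] at hS ⊢
    rw [hv, vsplash_mul_eq u h _ _ hu, hS]
  · rintro ⟨hx, hS⟩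
    refine ⟨h⁻¹ * x, ⟨(mul_mem_GX u h _ hu).1 (by simpa using hx), ?_⟩, by simp⟩
    rw [splash_eq_iff] at hS ⊢
    rw [← vsplash_mul_eq u h _ _ hu, ← hv, mul_inv_cancel_left, hS]

lemma card_splash (s : F →ₐ[k] F) (hs : ∀ x, s x = x ^ q) (hq : 2 ≤ q)
    (hF : Fintype.card F = q ^ 3) (h3 : ∀ x, s (s (s x)) = x) (hr : Module.finrank k F = 3)
    (u : Fin 3 → F) (g : GL (Fin 3) F) (hg : ExteriorTo k F g u) :
    (UU u).ncard = ((fun x => SplashOf k F x u) '' GX k u).ncard *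
      (2 * (q ^ 3 * (q ^ 3 * ((q ^ 3 - 1) * (q ^ 2 + q + 1))))) := by
  have him : (fun x => SplashOf k F x u) '' GX k u =
      (fun h => SplashOf k F (h * g) u) '' UU u := by
    ext X
    constructor
    · rintro ⟨x, hx, rfl⟩
      obtain ⟨h, m, hu, e⟩ := trans_core hr u g x hg hx
      refine ⟨h, hu, ?_⟩
      dsimp only
      rw [splash_eq_iff, e, vsplash_emb]
    · rintro ⟨h, hh, rfl⟩
      exact ⟨h * g, (mul_mem_GX u h g hh).2 hg, rfl⟩
  rw [him]
  apply fib
  intro a ha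
  have hag : ExteriorTo k F (a * g) u := (mul_mem_GX u a g ha).2 hg
  rw [← stab_ncard s hs hq hF h3 hr u (a * g) hag]
  rw [← Set.ncard_image_of_injective 
    {h | h ∈ UU u ∧ vsplash k u (h * (a * g)) = vsplash k u (a * g)} (mul_left_injective a)]
  congr 1
  have ha : u ᵥ* a.1 = u := ha
  ext x
  constructor
  · rintro ⟨hx, hS⟩
    have hx : u ᵥ* x.1 = u := hx
    refine ⟨x * a⁻¹, ⟨?_, ?_⟩, by simp⟩
    · change u ᵥ* _ = u
      rw [Units.val_mul, ← Matrix.vecMul_vecMul, hx]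
      conv_lhs => rw [← ha, Matrix.vecMul_vecMul, ← Units.val_mul]
      simp
    · rw [splash_eq_iff] at hS
      rw [← hS]; congr 1; group
  · rintro ⟨h, ⟨hh, hS⟩, rfl⟩
    have hh : u ᵥ* h.1 = u := hh
    refine ⟨?_, ?_⟩
    · change u ᵥ* (h * a).1 = u
      rw [Units.val_mul, ← Matrix.vecMul_vecMul, hh, ha]
    · rw [splash_eq_iff, ← hS]; simp [mul_assoc]
end cnt

/-- for any line u of PG(2,q^3): every exterior splash S on u comes from
exactly 2q^6(q^3-1) order-q-subplanes; there are q^9(q^3-1)(q^3+1)(q-1) subplanes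
exterior to u, and (1/2)q^3(q^3+1)(q-1) exterior splashes on u; the stabilizer of the
line u is transitive on the subplanes exterior to u. -/
theorem stmt12 (p n q : ℕ) (hp : p.Prime) (hn : 0 < n) (hq : q = p ^ n)
    (k F : Type) [Field k] [Field F] [Algebra k F] [Fintype k] [Fintype F]
    (hk : Fintype.card k = q) (hF : Fintype.card F = q ^ 3)
    (u : Fin 3 → F) (hu : u ≠ 0) :
    (∀ g : GL (Fin 3) F, ExteriorTo k F g u →
      Set.ncard {S : Set (Projectivization F (Fin 3 → F)) | ∃ g' : GL (Fin 3) F,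
          S = Subplane k F g' ∧ ExteriorTo k F g' u ∧
          SplashOf k F g' u = SplashOf k F g u}
        = 2 * q ^ 6 * (q ^ 3 - 1)) ∧
    Set.ncard {S : Set (Projectivization F (Fin 3 → F)) | ∃ g' : GL (Fin 3) F,
        S = Subplane k F g' ∧ ExteriorTo k F g' u} =
      q ^ 9 * (q ^ 3 - 1) * (q ^ 3 + 1) * (q - 1) ∧
    2 * Set.ncard {X : Set (Projectivization F (Fin 3 → F)) | ∃ g' : GL (Fin 3) F,
        ExteriorTo k F g' u ∧ X = SplashOf k F g' u} =
      q ^ 3 * (q ^ 3 + 1) * (q - 1) ∧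
    (∀ g₁ g₂ : GL (Fin 3) F, ExteriorTo k F g₁ u → ExteriorTo k F g₂ u →
      ∃ h : GL (Fin 3) F,
        (∃ c : F, c ≠ 0 ∧
          Matrix.vecMul u ((h⁻¹ : GL (Fin 3) F) : Matrix (Fin 3) (Fin 3) F) = c • u) ∧
        Subplane k F (h * g₁) = Subplane k F g₂) := by
  have hq2 : 2 ≤ q := by
    rw [hq]; exact hp.two_le.trans (Nat.le_self_pow hn.ne' p)
  let s : F →ₐ[k] F := FiniteField.frobeniusAlgHom k F
  have hs : ∀ x, s x = x ^ q := by
    intro x; rw [← hk]; rfl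
  have h3 : ∀ x, s (s (s x)) = x := by
    intro x
    rw [hs, hs, hs, ← pow_mul, ← pow_mul]
    have : q * (q * q) = Fintype.card F := by rw [hF]; ring
    rw [this, FiniteField.pow_card]
  have hr : Module.finrank k F = 3 := by
    have h := Module.card_eq_pow_finrank (K := k) (V := F)
    rw [hk, hF] at h
    exact (Nat.pow_right_injective hq2 h).symm
  obtain ⟨g0, hg0⟩ : ∃ g : GL (Fin 3) F, ExteriorTo k F g u := by
    let b := Module.finBasisOfFinrankEq k F hr
    have hb : (b : Fin 3 → F) ≠ 0 := fun h => b.ne_zero 0 (congrFun h 0)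
    obtain ⟨g, hg⟩ := exists_trans u b hu hb
    refine ⟨g, ?_⟩
    rw [exterior_iff, ind_iff, hg]
    exact b.linearIndependent
  -- the sets of the statement as images
  have hE : {S : Set (Projectivization F (Fin 3 → F)) | ∃ g' : GL (Fin 3) F,
        S = Subplane k F g' ∧ ExteriorTo k F g' u} = Subplane k F '' GX k u := by
    ext S
    constructor
    · rintro ⟨g, rfl, h⟩; exact ⟨g, h, rfl⟩
    · rintro ⟨g, h, rfl⟩; exact ⟨g, rfl, h⟩
  have hX : {X : Set (Projectivization F (Fin 3 → F)) | ∃ g' : GL (Fin 3) F,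
        ExteriorTo k F g' u ∧ X = SplashOf k F g' u} = (fun x => SplashOf k F x u) '' GX k u := by
    ext S
    constructor
    · rintro ⟨g, h, rfl⟩; exact ⟨g, h, rfl⟩
    · rintro ⟨g, h, rfl⟩; exact ⟨g, h, rfl⟩
  have hZ : ∀ g : GL (Fin 3) F, {S : Set (Projectivization F (Fin 3 → F)) | ∃ g' : GL (Fin 3) F,
          S = Subplane k F g' ∧ ExteriorTo k F g' u ∧
          SplashOf k F g' u = SplashOf k F g u} = Subplane k F '' Phi k u g := by
    intro g
    ext S
    constructor
    · rintro ⟨g, rfl, h, h'⟩; exact ⟨g, ⟨h, h'⟩, rfl⟩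
    · rintro ⟨g, ⟨h, h'⟩, rfl⟩; exact ⟨g, rfl, h, h'⟩
  have hextsub : ∀ g ∈ GX k u, ∀ g', Subplane k F g' = Subplane k F g → g' ∈ GX k u := by
    intro g hg g' h
    change ExteriorTo k F g' u
    unfold ExteriorTo
    rw [h]; exact hg
  -- the numerical relations
  have r1 := card_UU hF u hu
  have r2 := card_GX (k := k) hr u hu
  have r3 := card_BB hk hF
  have r4 := card_sub (k := k) (GX k u) hextsub
  have r5 := card_splash s hs hq2 hF h3 hr u g0 hg0
  have r6 : ∀ g, ExteriorTo k F g u → (Phi k u g).ncard =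
      (Subplane k F '' Phi k u g).ncard * (BB k F).ncard := by
    intro g hg
    apply card_sub
    rintro x ⟨hx, hx'⟩ x' h
    exact ⟨hextsub x hx x' h, (splash_of_sub u x x' h).trans hx'⟩
  have r7 : ∀ g, ExteriorTo k F g u → (GX k u).ncard =
      ((fun x => SplashOf k F x u) '' GX k u).ncard * (Phi k u g).ncard := by
    intro g hg
    apply fib
    intro a ha
    exact Phi_const hr u a g ha hg
  have hB : 0 < (BB k F).ncard := BB_pos
  have hglk : 0 < Nat.card (GL (Fin 3) k) := Nat.card_pos
  have hQ8 : 8 ≤ q ^ 3 := by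
    calc 8 = 2 ^ 3 := by norm_num
      _ ≤ q ^ 3 := Nat.pow_le_pow_left hq2 3
  have hA : q ^ 3 - 1 = (q - 1) * (q ^ 2 + q + 1) := by
    obtain ⟨r, rfl⟩ := Nat.exists_eq_add_of_le hq2
    have : 2 + r - 1 = r + 1 := by omega
    rw [this]
    apply Nat.sub_eq_of_eq_add
    ring
  have hU : (UU u).ncard = (q ^ 3) ^ 3 * (q ^ 3 - 1) ^ 2 * (q ^ 3 + 1) := by
    rw [Matrix.card_GL_field, Fin.prod_univ_three, hF] at r1
    simp only [Fin.val_zero, Fin.val_one, Fin.val_two, pow_zero, pow_one] at r1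
    have hpos : 0 < (q ^ 3) ^ 3 - 1 := by
      have : q ^ 3 ≤ (q ^ 3) ^ 3 := Nat.le_self_pow (by norm_num) _
      omega
    rw [mul_assoc] at r1
    have r1' := Nat.eq_of_mul_eq_mul_left hpos r1
    rw [← r1']
    generalize q ^ 3 = Q at *
    obtain ⟨R, rfl⟩ := Nat.exists_eq_add_of_le hQ8
    have e0 : 8 + R - 1 = R + 7 := by omega
    have e1 : (8 + R) ^ 3 - (8 + R) = (8 + R) * (R + 7) * (R + 9) := by
      apply Nat.sub_eq_of_eq_add
      ring
    have e2 : (8 + R) ^ 3 - (8 + R) ^ 2 = (8 + R) ^ 2 * (R + 7) := by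
      apply Nat.sub_eq_of_eq_add
      ring
    rw [e0, e1, e2]
    ring
  have hApos : 0 < q ^ 3 - 1 := by omega
  have hq1 : 0 < q - 1 := by omega
  have hEc : (Subplane k F '' GX k u).ncard =
      q ^ 9 * (q ^ 3 - 1) * (q ^ 3 + 1) * (q - 1) := by
    apply Nat.eq_of_mul_eq_mul_left (Nat.mul_pos hB hApos)
    calc _ = (q ^ 3 - 1) * ((Subplane k F '' GX k u).ncard * (BB k F).ncard) := by ring
      _ = ((q ^ 3 - 1) * Nat.card (GL (Fin 3) k)) * (UU u).ncard := by rw [← r4, r2]; ring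
      _ = _ := by rw [r3, hU]; ring
  have hXc : 2 * ((fun x => SplashOf k F x u) '' GX k u).ncard =
      q ^ 3 * (q ^ 3 + 1) * (q - 1) := by
    have hpos : 0 < (q ^ 3) ^ 2 * (q ^ 3 - 1) * (q ^ 2 + q + 1) := by positivity
    apply Nat.eq_of_mul_eq_mul_left hpos
    have r5' := r5.symm.trans hU
    calc _ = ((fun x => SplashOf k F x u) '' GX k u).ncard *
      (2 * (q ^ 3 * (q ^ 3 * ((q ^ 3 - 1) * (q ^ 2 + q + 1))))) := by ring
      _ = (q ^ 3) ^ 3 * (q ^ 3 - 1) ^ 2 * (q ^ 3 + 1) := r5'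
      _ = (q ^ 3) ^ 3 * (q ^ 3 - 1) * ((q - 1) * (q ^ 2 + q + 1)) * (q ^ 3 + 1) := by
        rw [← hA]; ring
      _ = _ := by ring
  refine ⟨?_, ?_, ?_, ?_⟩
  · intro g hg
    rw [hZ]
    have e1 := r7 g hg
    rw [r4, r6 g hg, ← mul_assoc] at e1
    have e2 := Nat.eq_of_mul_eq_mul_right hB e1
    rw [hEc] at e2
    have hpos : 0 < q ^ 3 * (q ^ 3 + 1) * (q - 1) := by positivity
    apply Nat.eq_of_mul_eq_mul_left hpos
    rw [← hXc, mul_assoc, ← e2, hXc]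
    ring
  · rw [hE, hEc]
  · rw [hX, hXc]
  · intro g₁ g₂ h1 h2
    obtain ⟨h, m, hu', e⟩ := trans_core hr u g₁ g₂ h1 h2
    refine ⟨h, ⟨1, one_ne_zero, ?_⟩, ?_⟩
    · rw [one_smul]
      conv_lhs => rw [← hu', Matrix.vecMul_vecMul, ← Units.val_mul]
      simp
    · rw [e, sub_emb]
end

section
/- Let P ∈ PG(1,q^3) and let K ≤ PGL(2,q^3) be the stabilizer of P, of order q^3(q^3-1). Then K acts regularly on the set of order-q-sublines of PG(1,q^3) not containing P, of which there are exactly q^3(q^3-1). -/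
open Matrix

/-- The order-q-subline of PG(1,q^3): image of the canonical subline PG(1,q) under the
homography induced by g ∈ GL(2,q^3). -/
def Subline (k F : Type) [Field k] [Field F] [Algebra k F]
    (g : GL (Fin 2) F) : Set (Projectivization F (Fin 2 → F)) :=
  {x | ∃ v : Fin 2 → k, v ≠ 0 ∧ ∃ c : F, c ≠ 0 ∧
    x.rep = c • (g : Matrix (Fin 2) (Fin 2) F).mulVec (fun i => algebraMap k F (v i))}

/-- The image of a point set of PG(1,q^3) under the homography induced by g. -/
def ImgSet (F : Type) [Field F] (g : GL (Fin 2) F)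
    (S : Set (Projectivization F (Fin 2 → F))) : Set (Projectivization F (Fin 2 → F)) :=
  {y | ∃ x ∈ S, ∃ c : F, y.rep = c • (g : Matrix (Fin 2) (Fin 2) F).mulVec x.rep}


section helpers
variable {k F : Type} [Field k] [Field F] [Algebra k F]

/-- Extension of scalars for vectors. -/
def iv (F : Type) {k : Type} [Field k] [Field F] [Algebra k F] (v : Fin 2 → k) : Fin 2 → F :=
  fun i => algebraMap k F (v i)

lemma iv_ne {v : Fin 2 → k} (hv : v ≠ 0) : iv F v ≠ 0 := by
  intro h
  apply hv
  funext i
  have := congrFun h i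
  simpa [iv] using this

lemma gl_inv_mulVec (g : GL (Fin 2) F) (v : Fin 2 → F) :
    (g⁻¹).1 *ᵥ (g.1 *ᵥ v) = v := by
  rw [Matrix.mulVec_mulVec, ← Units.val_mul]; simp

lemma gl_mulVec_inv (g : GL (Fin 2) F) (v : Fin 2 → F) :
    g.1 *ᵥ ((g⁻¹).1 *ᵥ v) = v := by
  rw [Matrix.mulVec_mulVec, ← Units.val_mul]; simp

lemma gl_ne (g : GL (Fin 2) F) {v : Fin 2 → F} (hv : v ≠ 0) : g.1 *ᵥ v ≠ 0 := by
  intro h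
  apply hv
  rw [← gl_inv_mulVec g v, h, Matrix.mulVec_zero]

lemma gl_det_ne (g : GL (Fin 2) F) : g.1.det ≠ 0 :=
  ((Matrix.isUnit_iff_isUnit_det _).1 g.isUnit).ne_zero

lemma mem_subline (g : GL (Fin 2) F) (x : Projectivization F (Fin 2 → F)) :
    x ∈ Subline k F g ↔ ∃ v : Fin 2 → k, v ≠ 0 ∧ ∃ c : F, c ≠ 0 ∧
      x.rep = c • g.1 *ᵥ (iv F v) := Iff.rfl

lemma imgSet_subline (m g : GL (Fin 2) F) :
    ImgSet F m (Subline k F g) = Subline k F (m * g) := by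
  ext y
  constructor
  · rintro ⟨x, ⟨v, hv, d, hd, hx⟩, c, hy⟩
    refine ⟨v, hv, c * d, ?_, ?_⟩
    · intro h
      apply y.rep_nonzero
      rw [hy, hx, Matrix.mulVec_smul, smul_smul, h, zero_smul]
    · rw [hy, hx, Matrix.mulVec_smul, smul_smul, Units.val_mul, Matrix.mulVec_mulVec]
  · rintro ⟨v, hv, c, hc, hy⟩
    have hne := gl_ne g (iv_ne (F := F) hv)
    obtain ⟨a, ha⟩ := Projectivization.exists_smul_eq_mk_rep F _ hne
    refine ⟨Projectivization.mk F _ hne, ⟨v, hv, a, a.ne_zero, ha.symm⟩, c * (a : F)⁻¹, ?_⟩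
    rw [← ha, hy, Units.smul_def, Matrix.mulVec_smul, smul_smul, Units.val_mul,
      ← Matrix.mulVec_mulVec]
    congr 1
    field_simp

lemma notMem_iff (g : GL (Fin 2) F) (P : Projectivization F (Fin 2 → F)) :
    P ∉ Subline k F g ↔ ∀ u v : k,
      algebraMap k F u * ((g⁻¹).1 *ᵥ P.rep) 0 + algebraMap k F v * ((g⁻¹).1 *ᵥ P.rep) 1 = 0 →
        u = 0 ∧ v = 0 := by
  set w := (g⁻¹).1 *ᵥ P.rep with hw
  have hwne : w ≠ 0 := gl_ne _ P.rep_nonzero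
  have hP : P.rep = g.1 *ᵥ w := by rw [hw, gl_mulVec_inv]
  constructor
  · intro h u v huv
    by_contra hne
    apply h
    refine ⟨![-v, u], ?_, ?_⟩
    · intro h0
      apply hne
      have h1 := congrFun h0 0
      have h2 := congrFun h0 1
      simp at h1 h2
      exact ⟨h2, h1⟩
    suffices ∃ c : F, w = c • iv F ![-v, u] by
      obtain ⟨c, hc⟩ := this
      refine ⟨c, ?_, ?_⟩
      · rintro rfl
        apply hwne
        rw [hc, zero_smul]
      · rw [hP, hc, Matrix.mulVec_smul]; rfl
    by_cases hu : u = 0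
    · subst hu
      have hv : v ≠ 0 := fun h => hne ⟨rfl, h⟩
      have hv' : algebraMap k F v ≠ 0 := by simpa using hv
      simp [hv] at huv
      refine ⟨-(w 0) / algebraMap k F v, ?_⟩
      funext i
      fin_cases i
      · simp [iv]; field_simp
      · simp [iv, huv]
    · have hu' : algebraMap k F u ≠ 0 := by simpa using hu
      refine ⟨(w 1) / algebraMap k F u, ?_⟩
      funext i
      fin_cases i
      · simp [iv]; field_simp; linear_combination huv
      · simp [iv]; field_simp
  · rintro h ⟨v, hv, c, hc, hx⟩
    have hwv : w = c • iv F v := by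
      rw [hw, hx, Matrix.mulVec_smul]
      congr 1
      exact gl_inv_mulVec g _
    obtain ⟨h1, h0⟩ := h (v 1) (-(v 0)) (by rw [hwv]; simp [iv]; ring)
    apply hv
    funext i
    fin_cases i
    · simpa using h0
    · simpa using h1

lemma subline_eq_imp (g h : GL (Fin 2) F) (hgh : Subline k F g = Subline k F h) :
    ∃ A : Matrix (Fin 2) (Fin 2) k, ∃ l : F, l ≠ 0 ∧
      (h⁻¹ * g).1 = l • A.map (algebraMap k F) := by
  have key : ∀ v : Fin 2 → k, v ≠ 0 → ∃ u : Fin 2 → k, ∃ c : F, c ≠ 0 ∧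
      (h⁻¹ * g).1 *ᵥ (iv F v) = c • iv F u := by
    intro v hv
    have hne := gl_ne g (iv_ne (F := F) hv)
    obtain ⟨a, ha⟩ := Projectivization.exists_smul_eq_mk_rep F _ hne
    have hm : Projectivization.mk F _ hne ∈ Subline k F g := ⟨v, hv, a, a.ne_zero, ha.symm⟩
    rw [hgh] at hm
    obtain ⟨u, hu, c, hc, hx⟩ := hm
    refine ⟨u, (a : F)⁻¹ * c, by simp [hc], ?_⟩
    rw [← ha, Units.smul_def] at hx
    have : g.1 *ᵥ (iv F v) = ((a : F)⁻¹ * c) • h.1 *ᵥ (iv F u) := by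
      have h2 := congrArg (fun z => (a : F)⁻¹ • z) hx
      simp only [smul_smul] at h2
      rw [inv_mul_cancel₀ a.ne_zero, one_smul] at h2
      exact h2
    rw [Units.val_mul, ← Matrix.mulVec_mulVec, this, Matrix.mulVec_smul, gl_inv_mulVec]
  have hdet := gl_det_ne (h⁻¹ * g)
  set B := (h⁻¹ * g).1 with hB
  obtain ⟨u, α, hα, hu⟩ := key ![1, 0] (by intro h; simpa using congrFun h 0)
  obtain ⟨v, β, hβ, hv⟩ := key ![0, 1] (by intro h; simpa using congrFun h 1)
  obtain ⟨w, γ, hγ, hw⟩ := key ![1, 1] (by intro h; simpa using congrFun h 0)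
  have hu0 := congrFun hu 0
  have hu1 := congrFun hu 1
  have hv0 := congrFun hv 0
  have hv1 := congrFun hv 1
  have hw0 := congrFun hw 0
  have hw1 := congrFun hw 1
  simp [Matrix.mulVec, dotProduct, Fin.sum_univ_two, iv] at hu0 hu1 hv0 hv1 hw0 hw1
  rw [Matrix.det_fin_two, hu0, hu1, hv0, hv1] at hdet
  set f := algebraMap k F
  have hD : f (u 0) * f (v 1) - f (u 1) * f (v 0) ≠ 0 := by
    intro h0
    apply hdet
    linear_combination α * β * h0
  refine ⟨!![(w 0 * v 1 - w 1 * v 0) * u 0, (u 0 * w 1 - u 1 * w 0) * v 0;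
    (w 0 * v 1 - w 1 * v 0) * u 1, (u 0 * w 1 - u 1 * w 0) * v 1],
    γ / (f (u 0) * f (v 1) - f (u 1) * f (v 0)), div_ne_zero hγ hD, ?_⟩
  rw [hu0, hv0] at hw0
  rw [hu1, hv1] at hw1
  ext i j
  fin_cases i <;> fin_cases j <;> simp [hu0, hu1, hv0, hv1] <;>
    rw [div_mul_eq_mul_div, eq_div_iff hD]
  · linear_combination f (u 0) * (f (v 1) * hw0 - f (v 0) * hw1)
  · linear_combination f (v 0) * (f (u 0) * hw1 - f (u 1) * hw0)
  · linear_combination f (u 1) * (f (v 1) * hw0 - f (v 0) * hw1)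
  · linear_combination f (v 1) * (f (u 0) * hw1 - f (u 1) * hw0)

lemma map_iv (A : Matrix (Fin 2) (Fin 2) k) (v : Fin 2 → k) :
    A.map (algebraMap k F) *ᵥ (iv F v) = iv F (A *ᵥ v) := by
  funext i
  simp [iv, Matrix.mulVec, dotProduct, Fin.sum_univ_two]

lemma subline_mul_sub (h : GL (Fin 2) F) (A : GL (Fin 2) k) :
    Subline k F (h * Matrix.GeneralLinearGroup.map (algebraMap k F) A) ⊆ Subline k F h := by
  rintro x ⟨v, hv, c, hc, hx⟩
  refine ⟨A.1 *ᵥ v, gl_ne A hv, c, hc, ?_⟩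
  rw [hx, Units.val_mul, ← Matrix.mulVec_mulVec]
  congr 2
  exact map_iv A.1 v

lemma subline_mul (h : GL (Fin 2) F) (A : GL (Fin 2) k) :
    Subline k F (h * Matrix.GeneralLinearGroup.map (algebraMap k F) A) = Subline k F h := by
  apply (subline_mul_sub h A).antisymm
  have := subline_mul_sub (h * Matrix.GeneralLinearGroup.map (algebraMap k F) A) A⁻¹
  simpa [mul_assoc, ← map_mul] using this

lemma exists_A [FiniteDimensional k F] (h3 : Module.finrank k F = 3) (w z : Fin 2 → F)
    (hw : ∀ u v : k, algebraMap k F u * w 0 + algebraMap k F v * w 1 = 0 → u = 0 ∧ v = 0)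
    (hz : ∀ u v : k, algebraMap k F u * z 0 + algebraMap k F v * z 1 = 0 → u = 0 ∧ v = 0) :
    ∃ A : GL (Fin 2) k, ∃ l : F,
      (Matrix.GeneralLinearGroup.map (algebraMap k F) A).1 *ᵥ w = l • z := by
  let b : Fin 4 → F := ![w 0 * z 1, w 1 * z 1, - (w 0 * z 0), - (w 1 * z 0)]
  have hb : ¬ LinearIndependent k b := by
    intro hl
    have := hl.fintype_card_le_finrank
    simp [h3] at this
  rw [Fintype.not_linearIndependent_iff] at hb
  obtain ⟨a, ha, i, hi⟩ := hb
  simp [Fin.sum_univ_four, b, Algebra.smul_def] at ha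
  set f := algebraMap k F with hf
  have hz0 : z 0 ≠ 0 := by
    intro h
    have := hz 1 0 (by simp [h])
    simp at this
  have e1 : (f (a 0) * w 0 + f (a 1) * w 1) = (f (a 2) * w 0 + f (a 3) * w 1) / z 1 * z 0 := by
    have hz1 : z 1 ≠ 0 := by
      intro h
      have := hz 0 1 (by simp [h])
      simp at this
    field_simp
    linear_combination ha
  have e2 : (f (a 2) * w 0 + f (a 3) * w 1) = (f (a 2) * w 0 + f (a 3) * w 1) / z 1 * z 1 := by
    have hz1 : z 1 ≠ 0 := by
      intro h
      have := hz 0 1 (by simp [h])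
      simp at this
    field_simp
  generalize (f (a 2) * w 0 + f (a 3) * w 1) / z 1 = l at e1 e2
  have hl : l ≠ 0 := by
    rintro rfl
    obtain ⟨h0, h1⟩ := hw _ _ (e1.trans (zero_mul _))
    obtain ⟨h2, h3⟩ := hw _ _ (e2.trans (zero_mul _))
    apply hi
    fin_cases i <;> assumption
  have hdet : (!![a 0, a 1; a 2, a 3]).det ≠ 0 := by
    intro hd
    obtain ⟨u, hu, hu0⟩ := Matrix.exists_vecMul_eq_zero_iff.2 hd
    have h0 := congrFun hu0 0
    have h1 := congrFun hu0 1
    simp [Matrix.vecMul, dotProduct, Fin.sum_univ_two] at h0 h1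
    have h0' := congrArg f h0
    have h1' := congrArg f h1
    simp only [map_add, map_mul, map_zero] at h0' h1'
    have : l * (f (u 0) * z 0 + f (u 1) * z 1) = 0 := by
      linear_combination w 0 * h0' + w 1 * h1' - f (u 0) * e1 - f (u 1) * e2
    obtain ⟨r0, r1⟩ := hz _ _ ((mul_eq_zero.1 this).resolve_left hl)
    apply hu
    funext i
    fin_cases i <;> assumption
  refine ⟨Matrix.GeneralLinearGroup.mkOfDetNeZero _ hdet, l, ?_⟩
  funext i
  fin_cases i
  · simpa [Matrix.GeneralLinearGroup.mkOfDetNeZero, Matrix.mulVec, dotProduct,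
      Fin.sum_univ_two] using e1
  · simpa [Matrix.GeneralLinearGroup.mkOfDetNeZero, Matrix.mulVec, dotProduct,
      Fin.sum_univ_two] using e2

lemma mem_k_of_quadratic [FiniteDimensional k F] (h3 : Module.finrank k F = 3) (x : F) (b c : k)
    (h : x ^ 2 + algebraMap k F b * x + algebraMap k F c = 0) : ∃ y : k, algebraMap k F y = x := by
  have hd : (minpoly k x).natDegree ∣ 3 := h3 ▸ minpoly.degree_dvd (Algebra.IsIntegral.isIntegral x)
  have hle : (minpoly k x).natDegree ≤ 2 := by
    let P : Polynomial k := Polynomial.X ^ 2 + Polynomial.C b * Polynomial.X + Polynomial.C c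
    have hP : P.natDegree = 2 := by
      simp only [P]; compute_degree!
    have hP0 : P ≠ 0 := by
      intro h0; rw [h0] at hP; simp at hP
    rw [← hP]
    apply Polynomial.natDegree_le_of_dvd _ hP0
    apply minpoly.dvd
    simpa [P] using h
  have h1 : (minpoly k x).natDegree = 1 := by
    rcases (Nat.dvd_prime Nat.prime_three).1 hd with h | h
    · exact h
    · omega
  exact (minpoly.natDegree_eq_one_iff).1 h1

lemma scalar_of_eig [FiniteDimensional k F] (h3 : Module.finrank k F = 3) (w : Fin 2 → F)
    (hw : ∀ u v : k, algebraMap k F u * w 0 + algebraMap k F v * w 1 = 0 → u = 0 ∧ v = 0)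
    (A : Matrix (Fin 2) (Fin 2) k) (m : F) (h : A.map (algebraMap k F) *ᵥ w = m • w) :
    ∃ y : k, A = y • (1 : Matrix (Fin 2) (Fin 2) k) := by
  have e0 := congrFun h 0
  have e1 := congrFun h 1
  simp [Matrix.mulVec, dotProduct, Fin.sum_univ_two] at e0 e1
  set f := algebraMap k F with hf
  have hw0 : w 0 ≠ 0 := by
    intro h
    have := hw 1 0 (by simp [h])
    simp at this
  obtain ⟨y, hy⟩ := mem_k_of_quadratic h3 m (-(A 0 0 + A 1 1)) (A 0 0 * A 1 1 - A 0 1 * A 1 0) (by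
    simp only [map_neg, map_add, map_mul, map_sub]
    apply mul_left_cancel₀ hw0
    linear_combination (f (A 1 1) - m) * e0 - f (A 0 1) * e1)
  rw [← hy] at e0 e1
  obtain ⟨a, b⟩ := hw (A 0 0 - y) (A 0 1) (by rw [map_sub]; linear_combination e0)
  obtain ⟨c, d⟩ := hw (A 1 0) (A 1 1 - y) (by rw [map_sub]; linear_combination e1)
  refine ⟨y, ?_⟩
  ext i j
  fin_cases i <;> fin_cases j <;> simp <;> grind

lemma uniq [FiniteDimensional k F] (h3 : Module.finrank k F = 3)
    (P : Projectivization F (Fin 2 → F)) (g g₁ g₂ : GL (Fin 2) F) (hP : P ∉ Subline k F g)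
    (h1 : ∃ c : F, g₁.1 *ᵥ P.rep = c • P.rep) (h2 : ∃ c : F, g₂.1 *ᵥ P.rep = c • P.rep)
    (he : Subline k F (g₁ * g) = Subline k F (g₂ * g)) : ∃ a : F, g₁.1 = a • g₂.1 := by
  obtain ⟨A, l, hl, hA⟩ := subline_eq_imp _ _ he
  obtain ⟨c1, h1⟩ := h1
  obtain ⟨c2, h2⟩ := h2
  rw [notMem_iff] at hP
  have hc2 : c2 ≠ 0 := by
    rintro rfl
    exact gl_ne g₂ P.rep_nonzero (by rw [h2, zero_smul])
  have h2' : (g₂⁻¹).1 *ᵥ P.rep = c2⁻¹ • P.rep := by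
    have : P.rep = c2⁻¹ • g₂.1 *ᵥ P.rep := by rw [h2, smul_smul, inv_mul_cancel₀ hc2, one_smul]
    conv_lhs => rw [this]
    rw [Matrix.mulVec_smul, gl_inv_mulVec]
  obtain ⟨y, hy⟩ := scalar_of_eig h3 _ hP A (l⁻¹ * (c1 * c2⁻¹)) (by
    have hA' : A.map (algebraMap k F) = l⁻¹ • ((g₂ * g)⁻¹ * (g₁ * g)).1 := by
      rw [hA, smul_smul, inv_mul_cancel₀ hl, one_smul]
    rw [hA', Matrix.smul_mulVec, _root_.mul_inv_rev]
    simp only [Units.val_mul, ← Matrix.mulVec_mulVec]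
    rw [gl_mulVec_inv, h1]
    simp only [Matrix.mulVec_smul]
    rw [h2']
    simp only [Matrix.mulVec_smul, smul_smul])
  have hA2 : A.map (algebraMap k F) = algebraMap k F y • 1 := by
    rw [hy]
    ext i j
    fin_cases i <;> fin_cases j <;> simp
  rw [hA2, smul_smul] at hA
  refine ⟨l * algebraMap k F y, ?_⟩
  have : g₁.1 = (g₂ * g).1 * ((g₂ * g)⁻¹ * (g₁ * g)).1 * (g⁻¹).1 := by
    simp only [← Units.val_mul]
    congr 1
    group
  rw [this, hA]
  simp only [Matrix.mul_smul, mul_one, Matrix.smul_mul]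
  rw [← Units.val_mul]
  simp

lemma trans_ex [FiniteDimensional k F] (h3 : Module.finrank k F = 3)
    (P : Projectivization F (Fin 2 → F)) (g h : GL (Fin 2) F) (hP : P ∉ Subline k F g)
    (hP' : P ∉ Subline k F h) :
    ∃ m : GL (Fin 2) F, (∃ c : F, m.1 *ᵥ P.rep = c • P.rep) ∧
      Subline k F (m * g) = Subline k F h := by
  rw [notMem_iff] at hP hP'
  obtain ⟨A, l, hA⟩ := exists_A h3 _ _ hP hP'
  refine ⟨h * Matrix.GeneralLinearGroup.map (algebraMap k F) A * g⁻¹, ⟨l, ?_⟩, ?_⟩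
  · simp only [Units.val_mul, ← Matrix.mulVec_mulVec]
    rw [hA, Matrix.mulVec_smul, gl_mulVec_inv]
  · simp [subline_mul]

lemma mk_eq_iff (g₁ g₂ : GL (Fin 2) F) :
    QuotientGroup.mk' (Subgroup.center (GL (Fin 2) F)) g₁ = QuotientGroup.mk' _ g₂ ↔
      ∃ a : F, g₁.1 = a • g₂.1 := by
  rw [eq_comm, QuotientGroup.mk'_eq_mk']
  constructor
  · rintro ⟨z, hz, rfl⟩
    obtain ⟨a, ha⟩ := Matrix.GeneralLinearGroup.mem_center_iff_val_mem_range_scalar.1 hz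
    refine ⟨a, ?_⟩
    rw [Units.val_mul, ← ha, Matrix.scalar_apply, ← Matrix.smul_one_eq_diagonal]
    simp
  · rintro ⟨a, ha⟩
    refine ⟨g₂⁻¹ * g₁, ?_, by group⟩
    rw [Matrix.GeneralLinearGroup.mem_center_iff_val_mem_range_scalar]
    refine ⟨a, ?_⟩
    rw [Units.val_mul, ha, Matrix.mul_smul, ← Units.val_mul, Matrix.scalar_apply,
      ← Matrix.smul_one_eq_diagonal]
    simp

lemma ncard_image_eq {α β γ : Type} (s : Set α) (f : α → β) (g : α → γ)
    (h : ∀ x ∈ s, ∀ y ∈ s, f x = f y ↔ g x = g y) : (f '' s).ncard = (g '' s).ncard := by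
  classical
  have h1 : ∀ z : f '' s, ∃ x ∈ s, f x = z.1 := fun z => z.2
  choose r hr hfr using h1
  refine Set.ncard_congr (fun z hz => g (r ⟨z, hz⟩)) ?_ ?_ ?_
  · intro z hz
    exact ⟨_, hr _, rfl⟩
  · intro a b ha hb hab
    have := (h _ (hr _) _ (hr _)).2 hab
    rwa [hfr, hfr] at this
  · rintro b ⟨x, hx, rfl⟩
    refine ⟨f x, ⟨x, hx, rfl⟩, ?_⟩
    exact (h _ (hr _) _ hx).1 (hfr _)

lemma exists_gl (x y : Fin 2 → F) (hx : x ≠ 0) (hy : y ≠ 0) :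
    ∃ g : GL (Fin 2) F, g.1 *ᵥ x = y := by
  have key : ∀ y : Fin 2 → F, y ≠ 0 → ∃ g : GL (Fin 2) F, g.1 *ᵥ ![1, 0] = y := by
    intro y hy
    by_cases h : y 0 = 0
    · have h1 : y 1 ≠ 0 := by
        intro h1
        apply hy
        funext i
        fin_cases i <;> assumption
      refine ⟨Matrix.GeneralLinearGroup.mkOfDetNeZero !![y 0, 1; y 1, 0] (by simpa using h1), ?_⟩
      funext i
      fin_cases i <;> simp [Matrix.GeneralLinearGroup.mkOfDetNeZero]
    · refine ⟨Matrix.GeneralLinearGroup.mkOfDetNeZero !![y 0, 0; y 1, 1] (by simpa using h), ?_⟩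
      funext i
      fin_cases i <;> simp [Matrix.GeneralLinearGroup.mkOfDetNeZero]
  obtain ⟨g, hg⟩ := key x hx
  obtain ⟨h, hh⟩ := key y hy
  refine ⟨h * g⁻¹, ?_⟩
  rw [Units.val_mul, ← Matrix.mulVec_mulVec, ← hg, gl_inv_mulVec, hh]

lemma card_K [Fintype F] (P : Projectivization F (Fin 2 → F)) (K : Subgroup (GL (Fin 2) F))
    (hK : ∀ g : GL (Fin 2) F, g ∈ K ↔ ∃ c : F, g.1 *ᵥ P.rep = c • P.rep) :
    ((QuotientGroup.mk' (Subgroup.center (GL (Fin 2) F))) '' (K : Set (GL (Fin 2) F))).ncard =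
      Fintype.card F * (Fintype.card F - 1) := by
  classical
  obtain ⟨h, hh⟩ := exists_gl ![1, 0] P.rep
    (by intro h; simpa using congrFun h 0) P.rep_nonzero
  have hKM : ∀ g : GL (Fin 2) F, g ∈ K ↔ (h⁻¹ * g * h).1 1 0 = 0 := by
    intro g
    rw [hK]
    have e : ∀ c : F, g.1 *ᵥ P.rep = c • P.rep ↔ (h⁻¹ * g * h).1 *ᵥ ![1, 0] = c • ![1, 0] := by
      intro c
      simp only [Units.val_mul, ← Matrix.mulVec_mulVec]
      rw [hh]
      constructor
      · intro hc
        rw [hc, Matrix.mulVec_smul, ← hh, gl_inv_mulVec]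
      · intro hc
        rw [← gl_mulVec_inv h (g.1 *ᵥ P.rep), hc, Matrix.mulVec_smul, hh]
    simp only [e]
    constructor
    · rintro ⟨c, hc⟩
      simpa [Matrix.mulVec, dotProduct, Fin.sum_univ_two] using congrFun hc 1
    · intro h0
      refine ⟨(h⁻¹ * g * h).1 0 0, ?_⟩
      funext i
      fin_cases i
      · simp [Matrix.mulVec, dotProduct, Fin.sum_univ_two]
      · simpa [Matrix.mulVec, dotProduct, Fin.sum_univ_two] using h0
  let φ : GL (Fin 2) F → F × F := fun g =>
    ((h⁻¹ * g * h).1 0 1 / (h⁻¹ * g * h).1 1 1, (h⁻¹ * g * h).1 0 0 / (h⁻¹ * g * h).1 1 1)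
  have hnz : ∀ g ∈ K, (h⁻¹ * g * h).1 0 0 ≠ 0 ∧ (h⁻¹ * g * h).1 1 1 ≠ 0 := by
    intro g hg
    have h0 := (hKM g).1 hg
    have hd := gl_det_ne (h⁻¹ * g * h)
    rw [Matrix.det_fin_two, h0, mul_zero, sub_zero] at hd
    exact mul_ne_zero_iff.1 hd
  have hconj : ∀ g : GL (Fin 2) F, g.1 = h.1 * (h⁻¹ * g * h).1 * (h⁻¹).1 := by
    intro g
    simp only [← Units.val_mul]
    congr 1
    group
  have hφ : ∀ x ∈ (K : Set (GL (Fin 2) F)), ∀ y ∈ (K : Set (GL (Fin 2) F)),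
      QuotientGroup.mk' (Subgroup.center (GL (Fin 2) F)) x = QuotientGroup.mk' _ y ↔
        φ x = φ y := by
    intro x hx y hy
    rw [mk_eq_iff]
    have hx0 := (hKM x).1 hx
    have hy0 := (hKM y).1 hy
    obtain ⟨hx1, hx2⟩ := hnz x hx
    obtain ⟨hy1, hy2⟩ := hnz y hy
    constructor
    · rintro ⟨a, ha⟩
      have : (h⁻¹ * x * h).1 = a • (h⁻¹ * y * h).1 := by
        simp only [Units.val_mul, ha]
        simp only [Matrix.mul_smul, Matrix.smul_mul]
      have ha0 : a ≠ 0 := by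
        rintro rfl
        apply hx1
        rw [this]
        simp
      simp only [φ, this, Matrix.smul_apply, smul_eq_mul]
      rw [mul_div_mul_left _ _ ha0, mul_div_mul_left _ _ ha0]
    · intro he
      simp only [φ, Prod.mk.injEq] at he
      obtain ⟨he1, he2⟩ := he
      refine ⟨(h⁻¹ * x * h).1 1 1 / (h⁻¹ * y * h).1 1 1, ?_⟩
      rw [hconj x, hconj y]
      generalize (h⁻¹ * x * h).1 = M at *
      generalize (h⁻¹ * y * h).1 = N at *
      rw [← Matrix.smul_mul, ← Matrix.mul_smul]
      congr 2
      rw [div_eq_div_iff hx2 hy2] at he1 he2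
      ext i j
      fin_cases i <;> fin_cases j <;> simp <;> field_simp
      · linear_combination he2
      · linear_combination he1
      · rw [hx0, hy0]; simp
  rw [ncard_image_eq _ _ _ hφ]
  have him : φ '' (K : Set (GL (Fin 2) F)) =
      (((Finset.univ : Finset F) ×ˢ (Finset.univ.erase (0 : F)) : Finset (F × F)) : Set (F × F)) := by
    ext ⟨x, y⟩
    simp only [Set.mem_image, Finset.coe_product, Finset.coe_univ, Finset.coe_erase, Set.mem_prod,
      Set.mem_univ, true_and, Set.mem_sdiff, Set.mem_singleton_iff]
    constructor
    · rintro ⟨g, hg, he⟩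
      simp only [φ, Prod.mk.injEq] at he
      rw [← he.2]
      exact div_ne_zero (hnz g hg).1 (hnz g hg).2
    · intro hy
      let M : GL (Fin 2) F := Matrix.GeneralLinearGroup.mkOfDetNeZero !![y, x; 0, 1] (by simpa using hy)
      have hM : h⁻¹ * (h * M * h⁻¹) * h = M := by group
      refine ⟨h * M * h⁻¹, ?_, ?_⟩
      · change _ ∈ K
        rw [hKM, hM]
        simp [M, Matrix.GeneralLinearGroup.mkOfDetNeZero]
      · simp only [φ, hM]
        simp [M, Matrix.GeneralLinearGroup.mkOfDetNeZero]
  rw [him, Set.ncard_coe_finset, Finset.card_product, Finset.card_erase_of_mem (Finset.mem_univ _)]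
  simp

lemma exists_base [FiniteDimensional k F] (h3 : Module.finrank k F = 3)
    (P : Projectivization F (Fin 2 → F)) : ∃ g : GL (Fin 2) F, P ∉ Subline k F g := by
  obtain ⟨t, ht⟩ : ∃ t : F, ∀ y : k, algebraMap k F y ≠ t := by
    by_contra! hcon
    have : (⊥ : Subalgebra k F) = ⊤ := by
      rw [eq_top_iff]
      intro x _
      exact Algebra.mem_bot.2 (hcon x)
    have h1 := Subalgebra.bot_eq_top_iff_finrank_eq_one.1 this
    omega
  obtain ⟨g, hg⟩ := exists_gl ![1, t] P.rep
    (by intro h; simpa using congrFun h 0) P.rep_nonzero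
  refine ⟨g, ?_⟩
  rw [notMem_iff, ← hg, gl_inv_mulVec]
  intro u v huv
  simp at huv
  have hv : v = 0 := by
    by_contra hv
    have hv' : algebraMap k F v ≠ 0 := by simpa using hv
    apply ht (-u / v)
    rw [map_div₀, map_neg]
    field_simp
    linear_combination -huv
  subst hv
  simpa using huv

/-- The stabilizer of a point. -/
def stab (P : Projectivization F (Fin 2 → F)) : Subgroup (GL (Fin 2) F) where
  carrier := {g | ∃ c : F, g.1 *ᵥ P.rep = c • P.rep}
  one_mem' := ⟨1, by simp⟩
  mul_mem' := by
    rintro a b ⟨c, hc⟩ ⟨d, hd⟩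
    refine ⟨d * c, ?_⟩
    rw [Units.val_mul, ← Matrix.mulVec_mulVec, hd, Matrix.mulVec_smul, hc, smul_smul]
  inv_mem' := by
    rintro a ⟨c, hc⟩
    have hc0 : c ≠ 0 := by
      rintro rfl
      exact gl_ne a P.rep_nonzero (by rw [hc, zero_smul])
    refine ⟨c⁻¹, ?_⟩
    have : P.rep = c⁻¹ • a.1 *ᵥ P.rep := by rw [hc, smul_smul, inv_mul_cancel₀ hc0, one_smul]
    conv_lhs => rw [this]
    rw [Matrix.mulVec_smul, gl_inv_mulVec]

lemma mem_stab (P : Projectivization F (Fin 2 → F)) (g : GL (Fin 2) F) :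
    g ∈ stab P ↔ ∃ c : F, g.1 *ᵥ P.rep = c • P.rep := Iff.rfl

lemma stab_notMem (P : Projectivization F (Fin 2 → F)) (m g : GL (Fin 2) F) (hm : m ∈ stab P)
    (hP : P ∉ Subline k F g) : P ∉ Subline k F (m * g) := by
  rintro ⟨v, hv, c, hc, hx⟩
  apply hP
  obtain ⟨d, hd⟩ := (mem_stab P _).1 (inv_mem hm)
  have hd0 : d ≠ 0 := by
    rintro rfl
    exact gl_ne m⁻¹ P.rep_nonzero (by rw [hd, zero_smul])
  refine ⟨v, hv, d⁻¹ * c, mul_ne_zero (inv_ne_zero hd0) hc, ?_⟩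
  have : P.rep = d⁻¹ • (m⁻¹).1 *ᵥ P.rep := by rw [hd, smul_smul, inv_mul_cancel₀ hd0, one_smul]
  rw [this]
  conv_lhs => rw [hx]
  rw [Matrix.mulVec_smul, smul_smul, Units.val_mul, ← Matrix.mulVec_mulVec, gl_inv_mulVec]

lemma scal_subline (m₁ m₂ g : GL (Fin 2) F) (a : F) (h : m₁.1 = a • m₂.1) :
    Subline k F (m₁ * g) = Subline k F (m₂ * g) := by
  have ha : a ≠ 0 := by
    rintro rfl
    apply gl_det_ne m₁
    rw [h]
    simp
  ext x
  simp only [mem_subline, Units.val_mul, h, Matrix.smul_mul, Matrix.smul_mulVec, smul_smul]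
  constructor
  · rintro ⟨v, hv, c, hc, hx⟩
    exact ⟨v, hv, c * a, mul_ne_zero hc ha, hx⟩
  · rintro ⟨v, hv, c, hc, hx⟩
    refine ⟨v, hv, c * a⁻¹, mul_ne_zero hc (inv_ne_zero ha), ?_⟩
    rw [hx, mul_assoc, inv_mul_cancel₀ ha, mul_one]

end helpers

/-- The stabilizer K of a point P in PGL(2,q^3) has order q^3(q^3-1),
there are exactly q^3(q^3-1) order-q-sublines not containing P, and K acts regularly
(transitively, with uniqueness up to scalars) on them. -/
theorem stmt17 (p n q : ℕ) (hp : p.Prime) (hn : 0 < n) (hq : q = p ^ n)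
    (k F : Type) [Field k] [Field F] [Algebra k F] [Fintype k] [Fintype F]
    (hk : Fintype.card k = q) (hF : Fintype.card F = q ^ 3)
    (P : Projectivization F (Fin 2 → F)) :
    ∃ K : Subgroup (GL (Fin 2) F),
      (∀ g : GL (Fin 2) F, g ∈ K ↔ ∃ c : F,
        (g : Matrix (Fin 2) (Fin 2) F).mulVec P.rep = c • P.rep) ∧
      Nat.card (Subgroup.map (QuotientGroup.mk' (Subgroup.center (GL (Fin 2) F))) K)
        = q ^ 3 * (q ^ 3 - 1) ∧
      Set.ncard {S : Set (Projectivization F (Fin 2 → F)) |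
          (∃ g : GL (Fin 2) F, S = Subline k F g) ∧ P ∉ S} = q ^ 3 * (q ^ 3 - 1) ∧
      ∀ S T : Set (Projectivization F (Fin 2 → F)),
        (∃ g : GL (Fin 2) F, S = Subline k F g) → P ∉ S →
        (∃ g : GL (Fin 2) F, T = Subline k F g) → P ∉ T →
        (∃ g ∈ K, ImgSet F g S = T) ∧
        (∀ g₁ ∈ K, ∀ g₂ ∈ K, ImgSet F g₁ S = T → ImgSet F g₂ S = T →
          ∃ a : F, (g₁ : Matrix (Fin 2) (Fin 2) F)
            = a • (g₂ : Matrix (Fin 2) (Fin 2) F)) := by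
  have hq1 : 1 < q := by
    rw [hq]
    exact Nat.one_lt_pow hn.ne' hp.one_lt
  have : FiniteDimensional k F := Module.Finite.of_finite
  have h3 : Module.finrank k F = 3 := by
    have := Module.card_eq_pow_finrank (K := k) (V := F)
    rw [hk, hF] at this
    exact (Nat.pow_right_injective hq1 this).symm
  have hcard := card_K P (stab P) (mem_stab P)
  rw [hF] at hcard
  obtain ⟨g₀, hg₀⟩ := exists_base (k := k) h3 P
  refine ⟨stab P, mem_stab P, ?_, ?_, ?_⟩
  · rw [← hcard, ← Nat.card_coe_set_eq]
    rfl
  · rw [← hcard]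
    rw [ncard_image_eq _ _ (fun m => Subline k F (m * g₀))]
    · congr 1
      ext S
      constructor
      · rintro ⟨⟨h, rfl⟩, hS⟩
        obtain ⟨m, hm, he⟩ := trans_ex h3 P g₀ h hg₀ hS
        exact ⟨m, hm, he⟩
      · rintro ⟨m, hm, rfl⟩
        exact ⟨⟨_, rfl⟩, stab_notMem P m g₀ hm hg₀⟩
    · intro x hx y hy
      rw [mk_eq_iff]
      constructor
      · rintro ⟨a, ha⟩
        exact scal_subline x y g₀ a ha
      · intro he
        exact uniq h3 P g₀ x y hg₀ hx hy he
  · rintro S T ⟨g, rfl⟩ hS ⟨h, rfl⟩ hT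
    simp only [imgSet_subline]
    refine ⟨?_, ?_⟩
    · obtain ⟨m, hm, he⟩ := trans_ex h3 P g h hS hT
      exact ⟨m, hm, he⟩
    · intro g₁ h₁ g₂ h₂ e₁ e₂
      exact uniq h3 P g g₁ g₂ hS h₁ h₂ (e₁.trans e₂.symm)
end
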